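/- arXiv:2306.07259 — 2 statements merged into one kernel-verified Lean document; each statement's English description precedes it below -/
import Mathlib

section
/- Let H be a real-analytic hypersurface in an open set U ⊆ ℂⁿ (n ≥ 2) that is curve-supported from two sides at a point p ∈ H. Then there exists ε > 0 such that every point q ∈ B_ε(p) lies on an analytic disc attached to H whose image is contained in U. -/
open Metric

noncomputable section

/-- `H` is a (singular) real-analytic hypersurface in the open set `U ⊆ ℂⁿ`:
`H = {z ∈ U : ρ z = 0}` for some real-analytic `ρ : U → ℝ` (analytic over `ℝ`),
`H` nonempty, and `ρ` does not vanish identically on any connected component of `U`. -/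
def IsRealAnalyticHypersurface {n : ℕ} (U H : Set (EuclideanSpace ℂ (Fin n))) : Prop :=
  IsOpen U ∧ H.Nonempty ∧
    ∃ ρ : EuclideanSpace ℂ (Fin n) → ℝ,
      AnalyticOnNhd ℝ ρ U ∧
      H = {z | z ∈ U ∧ ρ z = 0} ∧
      ∀ z ∈ U, ∃ w ∈ connectedComponentIn U z, ρ w ≠ 0

/-- `C = φ '' 𝔻` is a support curve for `H` at `p`, parametrized by the nonconstant
holomorphic map `φ : 𝔻 → U` with `φ 0 = p` and `C ∩ H = {p}`. -/
def IsSupportCurveVia {n : ℕ} (U H : Set (EuclideanSpace ℂ (Fin n)))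
    (p : EuclideanSpace ℂ (Fin n)) (φ : ℂ → EuclideanSpace ℂ (Fin n))
    (C : Set (EuclideanSpace ℂ (Fin n))) : Prop :=
  DifferentiableOn ℂ φ (ball 0 1) ∧
  Set.MapsTo φ (ball 0 1) U ∧
  (∃ a ∈ ball (0 : ℂ) 1, ∃ b ∈ ball (0 : ℂ) 1, φ a ≠ φ b) ∧
  φ 0 = p ∧
  C = φ '' ball 0 1 ∧
  C ∩ H = {p}

/-- `C` is a support curve for `H` at `p`. -/
def IsSupportCurve {n : ℕ} (U H : Set (EuclideanSpace ℂ (Fin n)))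
    (p : EuclideanSpace ℂ (Fin n)) (C : Set (EuclideanSpace ℂ (Fin n))) : Prop :=
  ∃ φ : ℂ → EuclideanSpace ℂ (Fin n), IsSupportCurveVia U H p φ C

/-- `V` is a connected component of `U \ H`. -/
def IsComponentOfComplement {n : ℕ} (U H V : Set (EuclideanSpace ℂ (Fin n))) : Prop :=
  ∃ x ∈ U \ H, V = connectedComponentIn (U \ H) x

/-- `H` is curve-supported from two sides at `p`: there are two support curves at `p`
lying (off `p`) in two distinct connected components of `U \ H`. -/
def CurveSupportedFromTwoSides {n : ℕ} (U H : Set (EuclideanSpace ℂ (Fin n)))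
    (p : EuclideanSpace ℂ (Fin n)) : Prop :=
  ∃ C₁ C₂ V₁ V₂ : Set (EuclideanSpace ℂ (Fin n)),
    IsSupportCurve U H p C₁ ∧ IsSupportCurve U H p C₂ ∧
    IsComponentOfComplement U H V₁ ∧ IsComponentOfComplement U H V₂ ∧
    V₁ ≠ V₂ ∧ C₁ \ {p} ⊆ V₁ ∧ C₂ \ {p} ⊆ V₂

/-- `ψ` is an analytic disc attached to `S`: a nonconstant continuous map on the closed
unit disc, holomorphic on the open unit disc, with boundary values in `S`. -/
def IsAttachedDisc {n : ℕ} (S : Set (EuclideanSpace ℂ (Fin n)))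
    (ψ : ℂ → EuclideanSpace ℂ (Fin n)) : Prop :=
  ContinuousOn ψ (closedBall 0 1) ∧
  DifferentiableOn ℂ ψ (ball 0 1) ∧
  (∃ a ∈ closedBall (0 : ℂ) 1, ∃ b ∈ closedBall (0 : ℂ) 1, ψ a ≠ ψ b) ∧
  ψ '' sphere 0 1 ⊆ S

/-- The polynomial hull of `K ⊆ ℂⁿ`. -/
def polyHull {n : ℕ} (K : Set (EuclideanSpace ℂ (Fin n))) : Set (EuclideanSpace ℂ (Fin n)) :=
  {z | ∀ P : MvPolynomial (Fin n) ℂ,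
    ‖MvPolynomial.eval (fun i => z i) P‖ ≤
      ⨆ w : K, ‖MvPolynomial.eval (fun i => (w : EuclideanSpace ℂ (Fin n)) i) P‖}

/-- The rational hull of `K ⊆ ℂⁿ`. -/
def ratHull {n : ℕ} (K : Set (EuclideanSpace ℂ (Fin n))) : Set (EuclideanSpace ℂ (Fin n)) :=
  {z | ∀ P : MvPolynomial (Fin n) ℂ,
    MvPolynomial.eval (fun i => z i) P ∈
      (fun w : EuclideanSpace ℂ (Fin n) => MvPolynomial.eval (fun i => w i) P) '' K}

/-!
Let `φ₁` and `φ₂` parametrize support curves on the two sides of `H = {ρ = 0}`. For suitable `r₁`,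
`r₂` and `N`, the disc `Ψ z = φ₁ (r₁ z ^ N) + φ₂ (2 r₂ z) - 2 p + q` has centre `q` and sends the
circles `|z| = 1` and `|z| = 1 / 2` into different components of `U \ H`. So the zero set of
`σ = ρ ∘ Ψ` separates the circles, and there is a bounded simply connected domain `Ω ∋ 0` with
frontier in `{σ = 0}`. If `g` is a Riemann map of `Ω`, then `Ψ ∘ g` is the required disc, once `g`
extends continuously to the circle. If `g` had more than one limit value at a boundary point `ζ`,
its limit values there would form a connected piece of `{σ = 0}`, which contains an analytic arc;
then `g⁻¹` would have the boundary value `ζ` all along the arc and hence be constant.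
-/

open Set Filter Topology Bornology Polynomial
open scoped ComplexConjugate

/-! ### The maximum principle and the Schwarz-Pick inequality -/

theorem norm_le_of_eventually_norm_le_at_frontier {E F : Type*}
    [NormedAddCommGroup E] [NormedSpace ℂ E] [Nontrivial E]
    [NormedAddCommGroup F] [NormedSpace ℂ F] {G : Set E} {f : E → F} {C : ℝ}
    (hG : IsOpen G) (hGb : IsBounded G) (hf : DifferentiableOn ℂ f G)
    (hfr : ∀ x ∈ frontier G, ∀ c > C, ∀ᶠ z in 𝓝[G] x, ‖f z‖ ≤ c) {z : E} (hz : z ∈ G) :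
    ‖f z‖ ≤ C := by
  by_contra! hlt
  obtain ⟨c, hCc, hcz⟩ := exists_between hlt
  have hclosure : closure (G ∩ {w | c < ‖f w‖}) ⊆ G := by
    intro w hw
    by_contra hwG
    have hw_fr : w ∈ frontier G := ⟨closure_mono inter_subset_left hw, by rwa [hG.interior_eq]⟩
    have hle := eventually_nhdsWithin_iff.1 (hfr w hw_fr c hCc)
    obtain ⟨v, hv, hvle⟩ := ((mem_closure_iff_frequently.1 hw).and_eventually hle).exists
    exact (hvle hv.1).not_gt hv.2
  have hopen : IsOpen (G ∩ {w | c < ‖f w‖}) :=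
    hf.continuousOn.norm.isOpen_inter_preimage hG isOpen_Ioi
  refine hcz.not_ge (Complex.norm_le_of_forall_mem_frontier_norm_le
    (hGb.subset inter_subset_left) (hf.mono hclosure).diffContOnCl (fun w hw ↦ ?_)
    (subset_closure ⟨hz, hcz⟩))
  rw [hopen.frontier_eq] at hw
  exact not_lt.1 fun h ↦ hw.2 ⟨hclosure hw.1, h⟩

/-- The automorphism `z ↦ (z - a) / (1 - conj a * z)` of the unit disc taking `a` to `0`. -/
def discMobius (a z : ℂ) : ℂ := (z - a) / (1 - conj a * z)

@[simp]
theorem discMobius_self (a : ℂ) : discMobius a a = 0 := by simp [discMobius]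

theorem one_sub_conj_mul_self (a : ℂ) : 1 - conj a * a = ((1 - ‖a‖ ^ 2 : ℝ) : ℂ) := by
  rw [Complex.conj_mul']
  push_cast
  rfl

theorem one_sub_sq_norm_pos {a : ℂ} (ha : ‖a‖ < 1) : 0 < 1 - ‖a‖ ^ 2 := by
  nlinarith [norm_nonneg a]

theorem one_sub_conj_mul_ne_zero {a z : ℂ} (ha : ‖a‖ < 1) (hz : ‖z‖ < 1) :
    1 - conj a * z ≠ 0 := by
  refine sub_ne_zero.2 fun h ↦ ?_
  have hnorm : ‖a‖ * ‖z‖ = 1 := by rw [← Complex.norm_conj a, ← norm_mul, ← h, norm_one]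
  nlinarith [norm_nonneg a, norm_nonneg z]

theorem norm_discMobius_lt_one {a z : ℂ} (ha : ‖a‖ < 1) (hz : ‖z‖ < 1) :
    ‖discMobius a z‖ < 1 := by
  rw [discMobius, norm_div, div_lt_one (norm_pos_iff.2 (one_sub_conj_mul_ne_zero ha hz))]
  have hsq : ‖1 - conj a * z‖ ^ 2 - ‖z - a‖ ^ 2 = (1 - ‖a‖ ^ 2) * (1 - ‖z‖ ^ 2) := by
    simp only [← Complex.normSq_eq_norm_sq, Complex.normSq_apply, Complex.sub_re, Complex.sub_im,
      Complex.mul_re, Complex.mul_im, Complex.conj_re, Complex.conj_im, Complex.one_re,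
      Complex.one_im]
    ring
  have hpos := mul_pos (one_sub_sq_norm_pos ha) (one_sub_sq_norm_pos hz)
  exact lt_of_pow_lt_pow_left₀ 2 (norm_nonneg _) (by linarith)

theorem injOn_discMobius {a : ℂ} (ha : ‖a‖ < 1) : InjOn (discMobius a) (ball 0 1) := by
  intro x hx y hy h
  rw [mem_ball_zero_iff] at hx hy
  rw [discMobius, discMobius, div_eq_div_iff (one_sub_conj_mul_ne_zero ha hx)
    (one_sub_conj_mul_ne_zero ha hy)] at h
  have hmul : (x - y) * (1 - conj a * a) = 0 := by linear_combination h
  exact sub_eq_zero.1 ((mul_eq_zero.1 hmul).resolve_right (one_sub_conj_mul_ne_zero ha ha))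

theorem hasDerivAt_discMobius_comp {f : ℂ → ℂ} {a f' w : ℂ} (ha : ‖a‖ < 1) (hfw : ‖f w‖ < 1)
    (hf : HasDerivAt f f' w) :
    HasDerivAt (fun v ↦ discMobius a (f v))
      (f' * (1 - ‖a‖ ^ 2 : ℝ) / (1 - conj a * f w) ^ 2) w := by
  refine ((hf.sub_const a).fun_div ((hf.const_mul (conj a)).const_sub 1)
    (one_sub_conj_mul_ne_zero ha hfw)).congr_deriv ?_
  rw [← one_sub_conj_mul_self]
  ring

theorem norm_deriv_discMobius_comp {f : ℂ → ℂ} {w : ℂ} (hfw : ‖f w‖ < 1)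
    (hf : DifferentiableAt ℂ f w) :
    ‖deriv (fun v ↦ discMobius (f w) (f v)) w‖ = ‖deriv f w‖ / (1 - ‖f w‖ ^ 2) := by
  have hpos := one_sub_sq_norm_pos hfw
  rw [(hasDerivAt_discMobius_comp hfw hfw hf.hasDerivAt).deriv, one_sub_conj_mul_self, norm_div,
    norm_mul, norm_pow, Complex.norm_real, Real.norm_of_nonneg hpos.le]
  field_simp

theorem norm_deriv_le_of_forall_norm_lt_one {f : ℂ → ℂ} {c : ℂ} {r : ℝ} (hr : 0 < r)
    (hf : DifferentiableOn ℂ f (ball c r)) (hlt : ∀ z ∈ ball c r, ‖f z‖ < 1) :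
    ‖deriv f c‖ ≤ (1 - ‖f c‖ ^ 2) / r := by
  have hc : c ∈ ball c r := mem_ball_self hr
  have hdiff : ∀ z ∈ ball c r, DifferentiableAt ℂ f z := fun z hz ↦
    hf.differentiableAt (isOpen_ball.mem_nhds hz)
  have hschwarz := Complex.norm_deriv_le_div_of_mapsTo_ball (R₂ := 1)
    (f := fun z ↦ discMobius (f c) (f z))
    (fun z hz ↦ (hasDerivAt_discMobius_comp (hlt c hc) (hlt z hz)
      (hdiff z hz).hasDerivAt).differentiableAt.differentiableWithinAt)
    (fun z hz ↦ by simpa using (norm_discMobius_lt_one (hlt c hc) (hlt z hz)).le) hr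
  rw [norm_deriv_discMobius_comp (hlt c hc) (hdiff c hc),
    div_le_iff₀ (one_sub_sq_norm_pos (hlt c hc))] at hschwarz
  exact hschwarz.trans_eq (by ring)

/-! ### Bounded holomorphic functions on a half disc -/

/-- The open upper half of the disc of radius `R` about the origin; the interval `(-R, R)` of the
real axis is the part of its boundary that matters. -/
def upperHalfDisc (R : ℝ) : Set ℂ := ball 0 R ∩ {w | 0 < w.im}

section HalfDisc

variable {R r : ℝ}

theorem isOpen_upperHalfDisc : IsOpen (upperHalfDisc R) :=
  isOpen_ball.inter (isOpen_lt continuous_const Complex.continuous_im)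

theorem isBounded_upperHalfDisc : IsBounded (upperHalfDisc R) :=
  isBounded_ball.subset inter_subset_left

theorem convex_upperHalfDisc : Convex ℝ (upperHalfDisc R) :=
  (convex_ball _ _).inter (convex_halfSpace_im_gt 0)

theorem upperHalfDisc_mono (h : r ≤ R) : upperHalfDisc r ⊆ upperHalfDisc R :=
  inter_subset_inter_left _ (ball_subset_ball h)

theorem ball_im_subset_upperHalfDisc {w : ℂ} (hw : w ∈ upperHalfDisc (R / 2)) :
    ball w w.im ⊆ upperHalfDisc R := by
  intro v hv
  rw [mem_ball_iff_norm] at hv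
  have hwR := mem_ball_zero_iff.1 hw.1
  have him : w.im ≤ ‖w‖ := (le_abs_self _).trans (Complex.abs_im_le_norm w)
  refine ⟨mem_ball_zero_iff.2 ?_, ?_⟩
  · linarith [norm_sub_norm_le v w]
  · have := (neg_le_abs _).trans (Complex.abs_im_le_norm (v - w))
    rw [Complex.sub_im] at this
    rw [mem_ofPred_eq]
    linarith

theorem frontier_upperHalfDisc_subset (hr : r ≠ 0) : frontier (upperHalfDisc r) ⊆
    (fun x : ℝ ↦ (x : ℂ)) '' Icc (-r) r ∪ {w | ‖w‖ = r ∧ 0 ≤ w.im} := by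
  intro w hw
  rcases frontier_inter_subset _ _ hw with ⟨h₁, h₂⟩ | ⟨h₁, h₂⟩
  · rw [frontier_ball _ hr] at h₁
    rw [Complex.closure_setOfPred_lt_im] at h₂
    exact .inr ⟨mem_sphere_zero_iff_norm.1 h₁, h₂⟩
  · rw [closure_ball _ hr, mem_closedBall_zero_iff] at h₁
    rw [Complex.frontier_setOfPred_lt_im] at h₂
    exact .inl ⟨w.re, abs_le.1 ((Complex.abs_re_le_norm w).trans h₁), Complex.ext rfl h₂.symm⟩

theorem nhdsWithin_upperHalfDisc {x : ℝ} (hx : |x| < R) :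
    𝓝[upperHalfDisc R] (x : ℂ) = 𝓝[{w | 0 < w.im}] (x : ℂ) := by
  have hball : (x : ℂ) ∈ ball 0 R := by
    rwa [mem_ball_zero_iff, Complex.norm_real, Real.norm_eq_abs]
  rw [upperHalfDisc, inter_comm]
  exact nhdsWithin_inter_of_mem' (mem_nhdsWithin_of_mem_nhds (isOpen_ball.mem_nhds hball))

theorem neBot_nhdsWithin_upperHalfDisc {x : ℝ} (hx : |x| < R) :
    (𝓝[upperHalfDisc R] (x : ℂ)).NeBot := by
  rw [nhdsWithin_upperHalfDisc hx, ← mem_closure_iff_nhdsWithin_neBot,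
    Complex.closure_setOfPred_lt_im]
  exact (Complex.ofReal_im x).ge

theorem norm_mul_exp_re_le_of_upperHalfDisc {f g : ℂ → ℂ} {m M C : ℝ} (hr : r ≠ 0)
    (hf : DifferentiableOn ℂ f (upperHalfDisc r)) (hg : Differentiable ℂ g)
    (hM : ∀ w ∈ upperHalfDisc r, ‖f w‖ ≤ M)
    (hm : ∀ x : ℝ, |x| ≤ r → Tendsto (fun w ↦ ‖f w‖) (𝓝[upperHalfDisc r] (x : ℂ)) (𝓝 m))
    (hreal : ∀ x : ℝ, |x| ≤ r → m * Real.exp (g x).re ≤ C)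
    (harc : ∀ w : ℂ, ‖w‖ = r → 0 ≤ w.im → M * Real.exp (g w).re ≤ C)
    {w : ℂ} (hw : w ∈ upperHalfDisc r) : ‖f w‖ * Real.exp (g w).re ≤ C := by
  rw [← Complex.norm_exp, ← norm_mul]
  refine norm_le_of_eventually_norm_le_at_frontier (f := fun z ↦ f z * Complex.exp (g z))
    isOpen_upperHalfDisc isBounded_upperHalfDisc (hf.mul hg.cexp.differentiableOn)
    (fun x hx c hc ↦ ?_) hw
  have hexp : Tendsto (fun z ↦ Real.exp (g z).re) (𝓝[upperHalfDisc r] x)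
      (𝓝 (Real.exp (g x).re)) :=
    (Real.continuous_exp.comp (Complex.continuous_re.comp hg.continuous)).continuousWithinAt
  simp_rw [norm_mul, Complex.norm_exp]
  rcases frontier_upperHalfDisc_subset hr hx with ⟨x, hxr, rfl⟩ | ⟨hxr, him⟩
  · have hxr := abs_le.2 hxr
    exact ((hm x hxr).mul hexp).eventually_le_const ((hreal x hxr).trans_lt hc)
  · filter_upwards [(hexp.const_mul M).eventually_le_const ((harc x hxr him).trans_lt hc),
      self_mem_nhdsWithin] with z hz hzr
    exact (mul_le_mul_of_nonneg_right (hM z hzr) (Real.exp_pos _).le).trans hz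

theorem two_mul_exp_le_one {x : ℝ} (hx : x ≤ -1) : 2 * Real.exp x ≤ 1 := by
  have hexp := Real.add_one_le_exp (-x)
  rw [Real.exp_neg, le_inv_comm₀ (by linarith) (Real.exp_pos x)] at hexp
  have hinv : (-x + 1)⁻¹ ≤ 2⁻¹ := by gcongr; linarith
  linarith

theorem sq_norm_le_of_abs_le_half_norm {v : ℂ} {a : ℝ} (hv : 0 ≤ v.im) (ha : |a| ≤ ‖v‖ / 2) :
    ‖v‖ ^ 2 ≤ 4 * ((v.re - a) ^ 2 - v.im ^ 2) + 8 * (‖v‖ * v.im) := by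
  have hsq : v.re ^ 2 + v.im ^ 2 = ‖v‖ ^ 2 := by
    rw [← Complex.normSq_eq_norm_sq, Complex.normSq_apply]
    ring
  have ha2 : a ^ 2 ≤ (‖v‖ / 2) ^ 2 := sq_le_sq.2 (ha.trans (le_abs_self _))
  have him : v.im ≤ ‖v‖ := (le_abs_self _).trans (Complex.abs_im_le_norm v)
  nlinarith [sq_nonneg (v.re - 2 * a), mul_nonneg hv (sub_nonneg.2 him)]

/-- A Hopf-type estimate: with `A = 4 / r ^ 2` and `B = 8 / r`, the barrier
`exp (-(A * (v - w.re) ^ 2 - I * B * v))` is at most `1` in modulus on the real axis and at most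
`1 / 2` on the arc. -/
theorem one_sub_norm_le_mul_im {f : ℂ → ℂ} (hr : 0 < r)
    (hf : DifferentiableOn ℂ f (upperHalfDisc r)) (hhalf : ∀ w ∈ upperHalfDisc r, 1 / 2 ≤ ‖f w‖)
    (hlim : ∀ x : ℝ, |x| ≤ r → Tendsto (fun w ↦ ‖f w‖) (𝓝[upperHalfDisc r] (x : ℂ)) (𝓝 1))
    {w : ℂ} (hw : w ∈ upperHalfDisc (r / 2)) : 1 - ‖f w‖ ≤ 8 / r * w.im := by
  have hwr : w ∈ upperHalfDisc r := upperHalfDisc_mono (by linarith) hw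
  have hne : ∀ v ∈ upperHalfDisc r, f v ≠ 0 := fun v hv ↦
    norm_pos_iff.1 (one_half_pos.trans_le (hhalf v hv))
  set g : ℂ → ℂ := fun v ↦ -((4 / r ^ 2 : ℝ) * (v - w.re) ^ 2 - Complex.I * (8 / r : ℝ) * v)
  have hre (v : ℂ) :
      (g v).re = -(4 / r ^ 2 * ((v.re - w.re) ^ 2 - v.im ^ 2) + 8 / r * v.im) := by
    simp only [g, pow_two, Complex.neg_re, Complex.sub_re, Complex.mul_re, Complex.mul_im,
      Complex.sub_im, Complex.ofReal_re, Complex.ofReal_im, Complex.I_re, Complex.I_im]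
    ring
  have hreal (x : ℝ) : 1 * Real.exp (g x).re ≤ 1 := by
    rw [one_mul, Real.exp_le_one_iff, hre, Complex.ofReal_re, Complex.ofReal_im]
    have : 0 ≤ 4 / r ^ 2 * (x - w.re) ^ 2 := by positivity
    linarith
  have harc (v : ℂ) (hv : ‖v‖ = r) (him : 0 ≤ v.im) : 2 * Real.exp (g v).re ≤ 1 := by
    have hwre : |w.re| ≤ ‖v‖ / 2 := by
      rw [hv]
      exact (Complex.abs_re_le_norm w).trans (mem_ball_zero_iff.1 hw.1).le
    refine two_mul_exp_le_one ?_
    rw [hre, neg_le_neg_iff]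
    calc (1 : ℝ) = r ^ 2 / r ^ 2 := (div_self (by positivity)).symm
      _ ≤ (4 * ((v.re - w.re) ^ 2 - v.im ^ 2) + 8 * (r * v.im)) / r ^ 2 := by
        gcongr
        exact hv ▸ sq_norm_le_of_abs_le_half_norm him hwre
      _ = _ := by field_simp
  have hmul := norm_mul_exp_re_le_of_upperHalfDisc (f := f⁻¹) hr.ne' (hf.inv hne)
    (by fun_prop : Differentiable ℂ g)
    (fun v hv ↦ by
      rw [Pi.inv_apply, norm_inv]
      exact inv_le_of_inv_le₀ two_pos (by simpa using hhalf v hv))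
    (fun x hx ↦ by simpa using (hlim x hx).inv₀ one_ne_zero) (fun x _ ↦ hreal x) harc hwr
  rw [Pi.inv_apply, norm_inv, inv_mul_le_one₀ (norm_pos_iff.2 (hne w hwr)), hre] at hmul
  have : 0 ≤ 4 / r ^ 2 * w.im ^ 2 := by positivity
  linarith [Real.add_one_le_exp (-(4 / r ^ 2 * ((w.re - w.re) ^ 2 - w.im ^ 2) + 8 / r * w.im))]

theorem norm_deriv_le_of_upperHalfDisc {f : ℂ → ℂ} {B : ℝ}
    (hf : DifferentiableOn ℂ f (upperHalfDisc R)) (hlt : ∀ w ∈ upperHalfDisc R, ‖f w‖ < 1) {w : ℂ}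
    (hw : w ∈ upperHalfDisc (R / 2)) (hB : 1 - ‖f w‖ ≤ B * w.im) : ‖deriv f w‖ ≤ 2 * B := by
  have hball := ball_im_subset_upperHalfDisc hw
  have hwlt := hlt w (hball (mem_ball_self hw.2))
  refine (norm_deriv_le_of_forall_norm_lt_one hw.2 (hf.mono hball)
    fun v hv ↦ hlt v (hball hv)).trans ?_
  rw [div_le_iff₀ hw.2]
  nlinarith [norm_nonneg (f w)]

/-- The Hopf-type estimate and the Schwarz-Pick inequality bound the derivative near the origin, so
the function is Lipschitz there. -/
theorem exists_continuous_eqOn_upperHalfDisc {f : ℂ → ℂ} (hR : 0 < R)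
    (hf : DifferentiableOn ℂ f (upperHalfDisc R)) (hlt : ∀ w ∈ upperHalfDisc R, ‖f w‖ < 1)
    (hlim : ∀ x : ℝ, |x| < R → Tendsto (fun w ↦ ‖f w‖) (𝓝[upperHalfDisc R] (x : ℂ)) (𝓝 1)) :
    ∃ r, 0 < r ∧ r ≤ R ∧ ∃ g : ℂ → ℂ, Continuous g ∧ EqOn f g (upperHalfDisc r) := by
  obtain ⟨r, hr, hrR, hhalf⟩ : ∃ r, 0 < r ∧ r < R ∧ ∀ w ∈ upperHalfDisc r, 1 / 2 ≤ ‖f w‖ := by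
    have hev := (hlim 0 (by simpa using hR)).eventually_const_le one_half_lt_one
    obtain ⟨e, he, hball⟩ := mem_nhdsWithin_iff.1 hev
    refine ⟨min e (R / 2), by positivity, (min_le_right _ _).trans_lt (half_lt_self hR),
      fun w hw ↦ hball ⟨?_, upperHalfDisc_mono ((min_le_right _ _).trans (half_le_self hR.le)) hw⟩⟩
    simpa using ball_subset_ball (min_le_left _ _) hw.1
  have hsub : upperHalfDisc r ⊆ upperHalfDisc R := upperHalfDisc_mono hrR.le
  have hhalfsub : upperHalfDisc (r / 2) ⊆ upperHalfDisc r := upperHalfDisc_mono (half_le_self hr.le)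
  have hderiv : ∀ w ∈ upperHalfDisc (r / 2), ‖deriv f w‖ ≤ 2 * (8 / r) := fun w hw ↦
    norm_deriv_le_of_upperHalfDisc (hf.mono hsub) (fun v hv ↦ hlt v (hsub hv)) hw <|
      one_sub_norm_le_mul_im hr (hf.mono hsub) hhalf
        (fun x hx ↦ (hlim x (hx.trans_lt hrR)).mono_left (nhdsWithin_mono _ hsub)) hw
  have hlip : LipschitzOnWith (2 * (8 / r)).toNNReal f (upperHalfDisc (r / 2)) :=
    convex_upperHalfDisc.lipschitzOnWith_of_nnnorm_deriv_le
      (fun w hw ↦ hf.differentiableAt (isOpen_upperHalfDisc.mem_nhds (hsub (hhalfsub hw))))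
      fun w hw ↦ NNReal.le_toNNReal_of_coe_le (hderiv w hw)
  obtain ⟨g, hg, hfg⟩ := hlip.extend_finite_dimension
  exact ⟨r / 2, half_pos hr, (half_le_self hr.le).trans hrR.le, g, hg.continuous, hfg⟩

theorem norm_mul_exp_le_of_tendsto_zero_of_upperHalfDisc {f : ℂ → ℂ} {M k : ℝ} (hr : 0 < r)
    (hf : DifferentiableOn ℂ f (upperHalfDisc r)) (hM : ∀ w ∈ upperHalfDisc r, ‖f w‖ ≤ M)
    (hlim : ∀ x : ℝ, |x| ≤ r → Tendsto f (𝓝[upperHalfDisc r] (x : ℂ)) (𝓝 0)) (hk : 0 ≤ k) {w : ℂ}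
    (hw : w ∈ upperHalfDisc r) :
    ‖f w‖ * Real.exp (k * (r ^ 2 / 2 - 2 * r * w.im + (w.im ^ 2 - w.re ^ 2))) ≤ M := by
  have hM0 : 0 ≤ M := (norm_nonneg _).trans (hM w hw)
  set g : ℂ → ℂ := fun v ↦ k * ((r ^ 2 / 2 : ℝ) + 2 * Complex.I * r * v - v ^ 2)
  have hre (v : ℂ) :
      (g v).re = k * (r ^ 2 / 2 - 2 * r * v.im + (v.im ^ 2 - v.re ^ 2)) := by
    simp only [g, Complex.mul_re, Complex.mul_im, Complex.add_re, Complex.sub_re, Complex.ofReal_re,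
      Complex.ofReal_im, Complex.add_im, Complex.sub_im, Complex.I_re, Complex.I_im, pow_two,
      Complex.re_ofNat, Complex.im_ofNat]
    ring
  rw [← hre]
  refine norm_mul_exp_re_le_of_upperHalfDisc hr.ne' hf (by fun_prop) hM
    (fun x hx ↦ by simpa using (hlim x hx).norm) (fun x _ ↦ by simpa) (fun v hv him ↦ ?_) hw
  have hvim : v.im ≤ r := hv ▸ (le_abs_self _).trans (Complex.abs_im_le_norm v)
  have hsq : v.re ^ 2 + v.im ^ 2 = r ^ 2 := by
    rw [← hv, ← Complex.normSq_eq_norm_sq, Complex.normSq_apply]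
    ring
  refine mul_le_of_le_one_right hM0 (Real.exp_le_one_iff.2 ?_)
  rw [hre]
  exact mul_nonpos_of_nonneg_of_nonpos hk (by nlinarith)

theorem eqOn_zero_of_tendsto_zero_of_upperHalfDisc {f : ℂ → ℂ} {M : ℝ}
    (hf : DifferentiableOn ℂ f (upperHalfDisc R)) (hM : ∀ w ∈ upperHalfDisc R, ‖f w‖ ≤ M)
    (hlim : ∀ x : ℝ, |x| < R → Tendsto f (𝓝[upperHalfDisc R] (x : ℂ)) (𝓝 0)) :
    EqOn f 0 (upperHalfDisc R) := by
  rcases le_or_gt R 0 with hR | hR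
  · exact fun w hw ↦ absurd (mem_ball_zero_iff.1 hw.1) (hR.trans (norm_nonneg w)).not_gt
  set r := R / 2 with hr_def
  have hr : 0 < r := half_pos hR
  have hsub : upperHalfDisc r ⊆ upperHalfDisc R := upperHalfDisc_mono (half_le_self hR.le)
  have hzero : ∀ w ∈ upperHalfDisc (r / 8), f w = 0 := by
    intro w hw
    have hκ : 0 < r ^ 2 / 2 - 2 * r * w.im + (w.im ^ 2 - w.re ^ 2) := by
      have hnorm := mem_ball_zero_iff.1 hw.1
      have him : w.im < r / 8 := ((le_abs_self _).trans (Complex.abs_im_le_norm w)).trans_lt hnorm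
      have hre : w.re ^ 2 ≤ (r / 8) ^ 2 := sq_le_sq.2 <|
        (Complex.abs_re_le_norm w).trans (hnorm.le.trans (le_abs_self _))
      nlinarith [mul_lt_mul_of_pos_left him hr]
    have hbound (k : ℕ) := norm_mul_exp_le_of_tendsto_zero_of_upperHalfDisc hr (hf.mono hsub)
      (fun v hv ↦ hM v (hsub hv))
      (fun x hx ↦ (hlim x (hx.trans_lt (half_lt_self hR))).mono_left (nhdsWithin_mono _ hsub))
      k.cast_nonneg (upperHalfDisc_mono (by linarith) hw)
    by_contra hne
    have htop := (Real.tendsto_exp_atTop.comp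
      (tendsto_natCast_atTop_atTop.atTop_mul_const hκ)).const_mul_atTop (norm_pos_iff.2 hne)
    obtain ⟨k, hk⟩ := (htop.eventually_gt_atTop M).exists
    exact (hbound k).not_gt hk
  have := neBot_nhdsWithin_upperHalfDisc (R := r / 8) (x := 0) (by rw [abs_zero]; positivity)
  obtain ⟨w, hw⟩ := (𝓝[upperHalfDisc (r / 8)] ((0 : ℝ) : ℂ)).nonempty_of_mem self_mem_nhdsWithin
  exact (hf.analyticOnNhd isOpen_upperHalfDisc).eqOn_zero_of_preconnected_of_eventuallyEq_zero
    convex_upperHalfDisc.isPreconnected (upperHalfDisc_mono (by linarith) hw)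
    (eventually_of_mem (isOpen_upperHalfDisc.mem_nhds hw) hzero)

theorem exists_interval_not_mapClusterPt_of_upperHalfDisc {f : ℂ → ℂ} (hR : 0 < R)
    (hf : DifferentiableOn ℂ f (upperHalfDisc R)) (hlt : ∀ w ∈ upperHalfDisc R, ‖f w‖ < 1)
    (hlim : ∀ x : ℝ, |x| < R → Tendsto (fun w ↦ ‖f w‖) (𝓝[upperHalfDisc R] (x : ℂ)) (𝓝 1))
    {ζ : ℂ} (hζ : ‖ζ‖ = 1) : ∃ x₀ δ : ℝ, 0 < δ ∧ |x₀| + δ ≤ R ∧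
      ∀ x : ℝ, |x - x₀| < δ → ¬ MapClusterPt ζ (𝓝[upperHalfDisc R] (x : ℂ)) f := by
  obtain ⟨r, hr, hrR, g, hg, hfg⟩ := exists_continuous_eqOn_upperHalfDisc hR hf hlt hlim
  have hsub : upperHalfDisc r ⊆ upperHalfDisc R := upperHalfDisc_mono hrR
  have htendsto (x : ℝ) : Tendsto f (𝓝[upperHalfDisc r] (x : ℂ)) (𝓝 (g x)) :=
    (hg.continuousWithinAt.tendsto).congr' (hfg.symm.eventuallyEq_nhdsWithin)
  obtain ⟨x₀, hx₀, hgx₀⟩ : ∃ x₀ : ℝ, |x₀| < r ∧ g x₀ ≠ ζ := by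
    by_contra! hall
    obtain ⟨w, hw⟩ := (neBot_nhdsWithin_upperHalfDisc (x := 0)
      (by rwa [abs_zero])).nonempty_of_mem self_mem_nhdsWithin
    have hconst := eqOn_zero_of_tendsto_zero_of_upperHalfDisc (f := fun v ↦ f v - ζ) (M := 1 + 1)
      ((hf.mono hsub).sub_const ζ)
      (fun v hv ↦ (norm_sub_le _ _).trans (add_le_add (hlt v (hsub hv)).le hζ.le))
      (fun x hx ↦ by simpa [hall x hx] using (htendsto x).sub_const ζ) hw
    exact (hlt w (hsub hw)).ne (sub_eq_zero.1 hconst ▸ hζ)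
  have hnear : ∀ᶠ x : ℝ in 𝓝 x₀, g x ≠ ζ :=
    (hg.comp Complex.continuous_ofReal).continuousAt.eventually_ne hgx₀
  obtain ⟨ε, hε, hball⟩ := Metric.eventually_nhds_iff.1 hnear
  have hδR : min ε (r - |x₀|) ≤ r - |x₀| := min_le_right _ _
  refine ⟨x₀, min ε (r - |x₀|), lt_min hε (sub_pos.2 hx₀), by linarith, fun x hx hcluster ↦ ?_⟩
  have hxr : |x| < r := by linarith [abs_sub_abs_le_abs_sub x x₀]
  rw [nhdsWithin_upperHalfDisc (hxr.trans_le hrR), ← nhdsWithin_upperHalfDisc hxr] at hcluster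
  have := neBot_nhdsWithin_upperHalfDisc hxr
  exact hball (hx.trans_le (min_le_left _ _)) (eq_of_nhds_neBot
    (hcluster.neBot.mono (inf_le_inf_left _ (htendsto x))) |>.symm)

end HalfDisc

/-! ### Polynomially approximable functions -/

theorem mem_closure_range_toContinuousMap_of_differentiable {f : ℂ → ℂ} (hf : Differentiable ℂ f) :
    (⟨f, hf.continuous⟩ : C(ℂ, ℂ)) ∈ closure (range (toContinuousMap : ℂ[X] → C(ℂ, ℂ))) := by
  have hsum := hf.hasFPowerSeriesOnBall 0 one_pos
  let P (n : ℕ) : ℂ[X] :=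
    ∑ k ∈ Finset.range n, C ((cauchyPowerSeries f 0 (1 : NNReal)).coeff k) * X ^ k
  refine mem_closure_of_tendsto (f := fun n ↦ (P n).toContinuousMap) (b := atTop)
    (ContinuousMap.tendsto_of_tendstoLocallyUniformly ?_) (.of_forall fun n ↦ mem_range_self _)
  rw [← tendstoLocallyUniformlyOn_univ]
  have := hsum.tendstoLocallyUniformlyOn'
  simp only [eball_top] at this
  convert! this using 3
  simp only [toContinuousMap_apply, P, eval_finsetSum, eval_mul, eval_C, eval_pow, eval_X, sub_zero,
    FormalMultilinearSeries.partialSum, FormalMultilinearSeries.apply_eq_pow_smul_coeff,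
    smul_eq_mul, mul_comm]

/-- `f` is a limit of polynomials on `s`, uniformly on compact subsets: on every compact `K ⊆ s` it
belongs to the uniform algebra usually denoted by `P(K)`. -/
def PolynomiallyApproximableOn (f : ℂ → ℂ) (s : Set ℂ) : Prop :=
  ∀ ⦃K : Set ℂ⦄ [CompactSpace K], K ⊆ s →
    ∃ g ∈ (polynomialFunctions K).topologicalClosure, ⇑g = K.domRestrict f

namespace PolynomiallyApproximableOn

variable {f g : ℂ → ℂ} {s : Set ℂ}

theorem eval (P : ℂ[X]) (s : Set ℂ) : PolynomiallyApproximableOn P.eval s := fun K _ _ ↦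
  ⟨P.toContinuousMapOn K, Subalgebra.le_topologicalClosure _ ⟨P, trivial, rfl⟩, rfl⟩

theorem const (c : ℂ) (s : Set ℂ) : PolynomiallyApproximableOn (fun _ ↦ c) s := by
  simpa using eval (C c) s

theorem id (s : Set ℂ) : PolynomiallyApproximableOn (fun z ↦ z) s := by
  simpa using eval X s

theorem mul (hf : PolynomiallyApproximableOn f s) (hg : PolynomiallyApproximableOn g s) :
    PolynomiallyApproximableOn (fun z ↦ f z * g z) s := by
  intro K _ hK
  obtain ⟨f', hf', hff'⟩ := hf hK
  obtain ⟨g', hg', hgg'⟩ := hg hK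
  exact ⟨f' * g', mul_mem hf' hg', by rw [ContinuousMap.coe_mul, hff', hgg']; rfl⟩

theorem entire_comp (hf : Differentiable ℂ f) (hg : PolynomiallyApproximableOn g s) :
    PolynomiallyApproximableOn (fun z ↦ f (g z)) s := by
  intro K _ hK
  obtain ⟨g', hg', hgg'⟩ := hg hK
  refine ⟨(⟨f, hf.continuous⟩ : C(ℂ, ℂ)).comp g', ?_,
    funext fun z ↦ congrArg f (congrFun hgg' z)⟩
  refine closure_minimal ?_ ((Subalgebra.isClosed_topologicalClosure _).preimage
    (ContinuousMap.continuous_precomp g'))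
    (mem_closure_range_toContinuousMap_of_differentiable hf)
  rintro _ ⟨P, rfl⟩
  have : P.toContinuousMap.comp g' = aeval g' P := by ext; simp
  simpa only [mem_preimage, this] using! Algebra.adjoin_le (singleton_subset_iff.2 hg')
    (aeval_mem_adjoin_singleton ℂ g' (p := P))

theorem of_tendstoLocallyUniformlyOn {ι : Type*} {l : Filter ι} [l.NeBot] {F : ι → ℂ → ℂ}
    (hF : ∀ i, PolynomiallyApproximableOn (F i) s) (hlim : TendstoLocallyUniformlyOn F f l s) :
    PolynomiallyApproximableOn f s := by
  intro K _ hK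
  choose G hG hGF using fun i ↦ hF i hK
  have hlimK := hlim.mono hK
  have hf : ContinuousOn f K := hlimK.continuousOn
    (.of_forall fun i ↦ continuousOn_iff_continuous_domRestrict.2 (hGF i ▸ (G i).continuous))
  refine ⟨⟨_, hf.domRestrict⟩,
    (Subalgebra.isClosed_topologicalClosure _).mem_of_tendsto (b := l)
      (ContinuousMap.tendsto_of_tendstoLocallyUniformly ?_) (.of_forall hG), rfl⟩
  rw [tendstoLocallyUniformlyOn_iff_tendstoLocallyUniformly_comp_coe] at hlimK
  simpa only [hGF] using! hlimK

theorem exists_dist_eval_lt {K : Set ℂ} (hf : PolynomiallyApproximableOn f s)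
    (hK : IsCompact K) (hKs : K ⊆ s) {ε : ℝ} (hε : 0 < ε) :
    ∃ P : ℂ[X], ∀ z ∈ K, dist (P.eval z) (f z) < ε := by
  have : CompactSpace K := isCompact_iff_compactSpace.1 hK
  obtain ⟨f', hf', hff'⟩ := hf hKs
  rw [← SetLike.mem_coe, Subalgebra.topologicalClosure_coe, polynomialFunctions_coe] at hf'
  obtain ⟨_, ⟨P, rfl⟩, hP⟩ := Metric.mem_closure_iff.1 hf' ε hε
  refine ⟨P, fun z hz ↦ ?_⟩
  rw [dist_comm] at hP
  simpa [hff'] using (ContinuousMap.dist_lt_iff hε).1 hP ⟨z, hz⟩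

theorem exists_tendstoLocallyUniformlyOn (hs : IsOpen s) (hf : PolynomiallyApproximableOn f s) :
    ∃ l : Filter ℂ[X], l.NeBot ∧ TendstoLocallyUniformlyOn (fun P z ↦ P.eval z) f l s := by
  let 𝔖 : Set (Set ℂ) := {K | IsCompact K ∧ K ⊆ s}
  have hbasis := UniformOnFun.hasBasis_nhds_of_basis ℂ ℂ 𝔖 (UniformOnFun.ofFun 𝔖 f)
    ⟨∅, isCompact_empty, empty_subset s⟩
    (fun K hK L hL ↦ ⟨K ∪ L, ⟨hK.1.union hL.1, union_subset hK.2 hL.2⟩,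
      subset_union_left, subset_union_right⟩) uniformity_basis_dist
  have hmem : UniformOnFun.ofFun 𝔖 f ∈
      closure (range fun P : ℂ[X] ↦ UniformOnFun.ofFun 𝔖 P.eval) := by
    rw [mem_closure_iff_nhds_basis hbasis]
    rintro ⟨K, ε⟩ ⟨hK, hε⟩
    obtain ⟨P, hP⟩ := hf.exists_dist_eval_lt hK.1 hK.2 hε
    exact ⟨_, ⟨P, rfl⟩, hP⟩
  refine ⟨_, comap_neBot_iff_frequently.2 (mem_closure_iff_frequently.1 hmem),
    (tendstoLocallyUniformlyOn_iff_forall_isCompact hs).2 fun K hKs hK ↦ ?_⟩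
  exact UniformOnFun.tendsto_iff_tendstoUniformlyOn.1 tendsto_comap K ⟨hK, hKs⟩

theorem differentiableOn (hs : IsOpen s) (hf : PolynomiallyApproximableOn f s) :
    DifferentiableOn ℂ f s := by
  obtain ⟨l, hl, hlim⟩ := hf.exists_tendstoLocallyUniformlyOn hs
  exact hlim.differentiableOn (.of_forall fun P ↦ P.differentiable.differentiableOn) hs

theorem deriv (hs : IsOpen s) (hf : PolynomiallyApproximableOn f s) :
    PolynomiallyApproximableOn (deriv f) s := by
  obtain ⟨l, hl, hlim⟩ := hf.exists_tendstoLocallyUniformlyOn hs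
  refine of_tendstoLocallyUniformlyOn (fun P ↦ ?_)
    (hlim.deriv (.of_forall fun P ↦ P.differentiable.differentiableOn) hs)
  convert! eval (derivative P) s using 2
  exact Polynomial.deriv _

end PolynomiallyApproximableOn

theorem PolynomiallyApproximableOn.of_mem_topologicalClosure {f : ℂ → ℂ} {K : Set ℂ}
    [CompactSpace K] {g : C(K, ℂ)} (hg : g ∈ (polynomialFunctions K).topologicalClosure)
    (hgf : ⇑g = K.domRestrict f) : PolynomiallyApproximableOn f K := by
  intro L _ hLK
  refine ⟨g.comp ⟨inclusion hLK, continuous_inclusion hLK⟩,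
    map_mem_closure (f := fun h : C(K, ℂ) ↦ h.comp ⟨inclusion hLK, continuous_inclusion hLK⟩)
      (ContinuousMap.continuous_precomp _) hg ?_,
    funext fun z ↦ congrFun hgf (inclusion hLK z)⟩
  rintro _ ⟨P, -, rfl⟩
  exact ⟨P, trivial, rfl⟩

-- As `Kᶜ` is connected, the coordinate function still has spectrum `K` in the algebra `P(K)`.
theorem exists_eval_eq_of_characterSpace_topologicalClosure {K : Set ℂ} [CompactSpace K]
    (hKc : IsPreconnected Kᶜ)
    (χ : WeakDual.characterSpace ℂ (polynomialFunctions K).topologicalClosure) :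
    ∃ z : K, ∀ h, χ h = h.1 z := by
  let A := (polynomialFunctions K).topologicalClosure
  have hA : IsClosed (A : Set C(K, ℂ)) := Subalgebra.isClosed_topologicalClosure _
  have : CompleteSpace A := hA.completeSpace_coe
  let ι : ℂ[X] →ₐ[ℂ] A := (toContinuousMapOnAlgHom K).codRestrict A
    fun P ↦ Subalgebra.le_topologicalClosure _ ⟨P, trivial, rfl⟩
  have hspec : spectrum ℂ (ι X : C(K, ℂ)) = K := by
    rw [ContinuousMap.spectrum_eq_range]
    ext
    simp [ι]
  have hχX : χ (ι X) ∈ K := by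
    have : χ (ι X) ∈ spectrum ℂ (ι X) := AlgHom.apply_mem_spectrum χ (ι X)
    rwa [Subalgebra.spectrum_eq_of_isPreconnected_compl A (ι X) (by rwa [hspec]), hspec] at this
  refine ⟨⟨χ (ι X), hχX⟩, fun h ↦ ?_⟩
  have hι : DenseRange ι :=
    ((denseRange_inclusion_iff subset_closure).2 subset_rfl).comp
      (Function.Surjective.denseRange
        (f := fun P : ℂ[X] ↦ (⟨P.toContinuousMapOn K, P, trivial, rfl⟩ : polynomialFunctions K))
        fun ⟨_, P, _, hP⟩ ↦ ⟨P, Subtype.ext hP⟩)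
      (continuous_inclusion subset_closure)
  refine congrFun (hι.equalizer (map_continuous χ) (h := fun h : A ↦ h.1 ⟨χ (ι X), hχX⟩)
    ((continuous_eval_const _).comp continuous_subtype_val) (funext fun P ↦ ?_)) h
  have hP : ι P = aeval (ι X) P := by rw [aeval_algHom_apply, aeval_X_left_apply]
  change χ (ι P) = P.eval (χ (ι X))
  rw [hP, ← coe_aeval_eq_eval]
  exact (aeval_algHom_apply (WeakDual.CharacterSpace.toAlgHom χ) (ι X) P).symm

namespace PolynomiallyApproximableOn

variable {f g : ℂ → ℂ} {s : Set ℂ}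

theorem inv_of_isPreconnected_compl {K : Set ℂ} [CompactSpace K] (hKc : IsPreconnected Kᶜ)
    (hf : PolynomiallyApproximableOn f K) (h0 : ∀ z ∈ K, f z ≠ 0) :
    PolynomiallyApproximableOn (fun z ↦ (f z)⁻¹) K := by
  obtain ⟨g, hg, hgf⟩ := hf subset_rfl
  have : CompleteSpace (polynomialFunctions K).topologicalClosure :=
    (Subalgebra.isClosed_topologicalClosure _).completeSpace_coe
  obtain ⟨u, hu⟩ : IsUnit (⟨g, hg⟩ : (polynomialFunctions K).topologicalClosure) := by
    by_contra hnu
    obtain ⟨χ, hχ⟩ := WeakDual.CharacterSpace.exists_apply_eq_zero hnu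
    obtain ⟨z, hz⟩ := exists_eval_eq_of_characterSpace_topologicalClosure hKc χ
    exact h0 z z.2 (by rw [← hχ, hz, hgf]; rfl)
  refine of_mem_topologicalClosure (u⁻¹).1.2 (funext fun z ↦ eq_inv_of_mul_eq_one_right ?_)
  have hz := congrArg (fun a ↦ a.1 z) u.mul_inv
  simpa [hu, hgf] using hz

end PolynomiallyApproximableOn

/-- Every compact subset of `s` lies in a compact subset of `s` that does not separate the plane;
for open `s` this is the hypothesis of Runge's theorem on polynomial approximation. -/
def HasConnectedComplExhaustion (s : Set ℂ) : Prop :=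
  ∀ ⦃K : Set ℂ⦄, IsCompact K → K ⊆ s → ∃ L, IsCompact L ∧ K ⊆ L ∧ L ⊆ s ∧ IsPreconnected Lᶜ

theorem PolynomiallyApproximableOn.inv {f : ℂ → ℂ} {s : Set ℂ} (hs : HasConnectedComplExhaustion s)
    (hf : PolynomiallyApproximableOn f s) (h0 : ∀ z ∈ s, f z ≠ 0) :
    PolynomiallyApproximableOn (fun z ↦ (f z)⁻¹) s := by
  intro K _ hK
  obtain ⟨L, hL, hKL, hLs, hLc⟩ := hs (isCompact_iff_compactSpace.2 ‹_›) hK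
  have : CompactSpace L := isCompact_iff_compactSpace.1 hL
  exact inv_of_isPreconnected_compl hLc (fun M _ hM ↦ hf (hM.trans hLs))
    (fun z hz ↦ h0 z (hLs hz)) hKL

theorem exists_ball_uniformCauchySeqOn {ι α β : Type*} [PseudoMetricSpace α] [ProperSpace α]
    [PseudoMetricSpace β] {l : Filter ι} {F : ι → α → β} {f : α → β} {s : Set α}
    (hs : IsOpen s) (hF : TendstoLocallyUniformlyOn F f l s) {x : α} (hx : x ∈ s) :
    ∃ r > 0, ball x r ⊆ s ∧ UniformCauchySeqOn F l (ball x r) := by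
  obtain ⟨r, hr, hrs⟩ := nhds_basis_closedBall.mem_iff.1 (hs.mem_nhds hx)
  exact ⟨r, hr, ball_subset_closedBall.trans hrs,
    ((tendstoLocallyUniformlyOn_iff_forall_isCompact hs).1 hF _ hrs
      (isCompact_closedBall x r)).uniformCauchySeqOn.mono ball_subset_closedBall⟩

theorem exists_derivative_eq_and_eval_eq_zero {𝕜 : Type*} [Field 𝕜] [CharZero 𝕜] (P : 𝕜[X])
    (x : 𝕜) :
    ∃ Q : 𝕜[X], derivative Q = P ∧ Q.eval x = 0 := by
  suffices ∃ Q : 𝕜[X], derivative Q = P by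
    obtain ⟨Q, rfl⟩ := this
    exact ⟨Q - C (Q.eval x), by simp, by simp⟩
  induction P using Polynomial.induction_on' with
  | add P₁ P₂ h₁ h₂ =>
    obtain ⟨Q₁, rfl⟩ := h₁
    obtain ⟨Q₂, rfl⟩ := h₂
    exact ⟨Q₁ + Q₂, derivative_add⟩
  | monomial n a =>
    refine ⟨monomial (n + 1) (a / (n + 1)), ?_⟩
    rw [derivative_monomial, Nat.add_sub_cancel, Nat.cast_succ,
      div_mul_cancel₀ _ (Nat.cast_add_one_ne_zero n)]

section Primitive

variable {ι 𝕜 G : Type*} [RCLike 𝕜] [NormedAddCommGroup G] [NormedSpace 𝕜 G] {l : Filter ι}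
  {F F' : ι → 𝕜 → G} {f' : 𝕜 → G} {s : Set 𝕜}

theorem cauchy_map_of_tendstoLocallyUniformlyOn_deriv (hs : IsOpen s) (hsc : IsPreconnected s)
    (hF : ∀ i, ∀ z ∈ s, HasDerivAt (F i) (F' i z) z) (hF' : TendstoLocallyUniformlyOn F' f' l s)
    {x y : 𝕜} (hx : x ∈ s) (hy : y ∈ s) (hFx : Cauchy (map (F · x) l)) :
    Cauchy (map (F · y) l) := by
  refine hsc.induction₂' (fun x y ↦ Cauchy (map (F · x) l) → Cauchy (map (F · y) l)) ?_
    (fun _ _ _ _ _ _ h₁ h₂ h ↦ h₂ (h₁ h)) hx hy hFx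
  intro x hx
  have : l.NeBot := hFx.1.of_map
  obtain ⟨r, hr, hrs, hFr⟩ := exists_ball_uniformCauchySeqOn hs hF' hx
  have hball {a b : 𝕜} (ha : ball a (r / 2) ⊆ ball x r) (hb : b ∈ ball a (r / 2))
      (h : Cauchy (map (F · a) l)) : Cauchy (map (F · b) l) :=
    (uniformCauchySeqOn_ball_of_deriv (hFr.mono ha)
      (fun i z hz ↦ hF i z (hrs (ha hz))) h).cauchy_map hb
  filter_upwards [mem_nhdsWithin_of_mem_nhds (ball_mem_nhds x (half_pos hr))] with y hy
  rw [mem_ball] at hy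
  exact ⟨hball (ball_subset_ball (half_le_self hr.le)) hy,
    hball (ball_subset_ball' (by linarith)) (mem_ball_comm.1 hy)⟩

theorem exists_tendstoLocallyUniformlyOn_of_deriv [CompleteSpace G] (hs : IsOpen s)
    (hsc : IsPreconnected s) (hF : ∀ i, ∀ z ∈ s, HasDerivAt (F i) (F' i z) z)
    (hF' : TendstoLocallyUniformlyOn F' f' l s) {x : 𝕜} (hx : x ∈ s)
    (hFx : Cauchy (map (F · x) l)) :
    ∃ f, TendstoLocallyUniformlyOn F f l s ∧ ∀ z ∈ s, HasDerivAt f (f' z) z := by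
  have : l.NeBot := hFx.1.of_map
  have hcauchy (z : 𝕜) (hz : z ∈ s) : Cauchy (map (F · z) l) :=
    cauchy_map_of_tendstoLocallyUniformlyOn_deriv hs hsc hF hF' hx hz hFx
  choose! f hf using fun z hz ↦ cauchy_map_iff_exists_tendsto.1 (hcauchy z hz)
  refine ⟨f, fun u hu z hz ↦ ?_,
    fun z hz ↦ hasDerivAt_of_tendstoLocallyUniformlyOn hs hF' (.of_forall hF) hf hz⟩
  obtain ⟨r, hr, hrs, hFr⟩ := exists_ball_uniformCauchySeqOn hs hF' hz
  have hFu := uniformCauchySeqOn_ball_of_deriv hFr (fun i y hy ↦ hF i y (hrs hy)) (hcauchy z hz)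
  exact ⟨ball z r, mem_nhdsWithin_of_mem_nhds (ball_mem_nhds z hr),
    hFu.tendstoUniformlyOn_of_tendsto (fun y hy ↦ hf y (hrs hy)) u hu⟩

end Primitive

namespace PolynomiallyApproximableOn

variable {f : ℂ → ℂ} {s : Set ℂ}

theorem exists_primitive (hs : IsOpen s) (hsc : IsPreconnected s)
    (hf : PolynomiallyApproximableOn f s) :
    ∃ g, PolynomiallyApproximableOn g s ∧ ∀ z ∈ s, HasDerivAt g (f z) z := by
  rcases s.eq_empty_or_nonempty with rfl | ⟨z₀, hz₀⟩
  · exact ⟨fun _ ↦ 0, const 0 _, fun z hz ↦ hz.elim⟩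
  obtain ⟨l, hl, hlim⟩ := hf.exists_tendstoLocallyUniformlyOn hs
  choose Q hQ hQz₀ using fun P : ℂ[X] ↦ exists_derivative_eq_and_eval_eq_zero P z₀
  obtain ⟨g, hQg, hg⟩ := exists_tendstoLocallyUniformlyOn_of_deriv
    (F := fun P z ↦ (Q P).eval z) hs hsc
    (fun P z _ ↦ by simpa only [hQ] using (Q P).hasDerivAt z) hlim hz₀
    (by simpa only [hQz₀] using tendsto_const_nhds.cauchy_map)
  exact ⟨g, of_tendstoLocallyUniformlyOn (fun P ↦ eval (Q P) s) hQg, hg⟩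

theorem exists_sq_eq (hs : IsOpen s) (hsc : IsPreconnected s) (hse : HasConnectedComplExhaustion s)
    (hf : PolynomiallyApproximableOn f s) (h0 : ∀ z ∈ s, f z ≠ 0) :
    ∃ g, PolynomiallyApproximableOn g s ∧ ∀ z ∈ s, g z ^ 2 = f z := by
  obtain ⟨g, hg, hgf⟩ := ((hf.deriv hs).mul (hf.inv hse h0)).exists_primitive hs hsc
  have hder (z : ℂ) (hz : z ∈ s) : HasDerivAt (fun z ↦ f z * Complex.exp (-g z)) 0 z := by
    have hfz := ((hf.differentiableOn hs).differentiableAt (hs.mem_nhds hz)).hasDerivAt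
    refine (hfz.fun_mul (hgf z hz).fun_neg.cexp).congr_deriv ?_
    have := h0 z hz
    field_simp
    ring
  obtain ⟨c, hc⟩ := hs.exists_is_const_of_deriv_eq_zero hsc
    (fun z hz ↦ (hder z hz).differentiableAt.differentiableWithinAt) (fun z hz ↦ (hder z hz).deriv)
  obtain ⟨d, hd⟩ := IsAlgClosed.exists_pow_nat_eq c two_pos
  refine ⟨fun z ↦ d * Complex.exp (2⁻¹ * g z), (const d s).mul
    (((const _ s).mul hg).entire_comp Complex.differentiable_exp), fun z hz ↦ ?_⟩
  calc (d * Complex.exp (2⁻¹ * g z)) ^ 2 = c * Complex.exp (g z) := by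
        rw [mul_pow, hd, ← Complex.exp_nat_mul]
        congr 2
        push_cast
        ring
    _ = f z := by rw [← hc z hz, mul_assoc, ← Complex.exp_add, neg_add_cancel, Complex.exp_zero,
        mul_one]

end PolynomiallyApproximableOn

/-! ### The Riemann mapping theorem -/

section Normal

variable {ι E G : Type*} [NormedAddCommGroup E] [NormedSpace ℂ E] [NormedAddCommGroup G]
  [NormedSpace ℂ G] {F : ι → E → G} {s : Set E} {M : ℝ}

theorem equicontinuousAt_of_forall_norm_le {x : E} (hs : s ∈ 𝓝 x)
    (hF : ∀ i, DifferentiableOn ℂ (F i) s) (hM : ∀ i, ∀ z ∈ s, ‖F i z‖ ≤ M) :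
    EquicontinuousAt F x := by
  obtain ⟨r, hr, hrs⟩ := Metric.mem_nhds_iff.1 hs
  refine Metric.equicontinuousAt_of_continuity_modulus (fun z ↦ (M + M) / r * dist z x)
    (Continuous.tendsto' (by fun_prop) _ _ (by simp)) F ?_
  filter_upwards [ball_mem_nhds x hr] with z hz i
  rw [dist_comm]
  refine Complex.dist_le_div_mul_dist_of_mapsTo_ball ((hF i).mono hrs) (fun w hw ↦ ?_) hz
  exact mem_closedBall_iff_norm.2
    (norm_sub_le_of_le (hM i w (hrs hw)) (hM i x (mem_of_mem_nhds hs)))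

theorem tendstoLocallyUniformlyOn_of_forall_norm_le [LocallyCompactSpace E] {l : Filter ι}
    {f : E → G} (hs : IsOpen s) (hF : ∀ i, DifferentiableOn ℂ (F i) s)
    (hM : ∀ i, ∀ z ∈ s, ‖F i z‖ ≤ M) (hlim : ∀ z ∈ s, Tendsto (F · z) l (𝓝 (f z))) :
    TendstoLocallyUniformlyOn F f l s := by
  refine (tendstoLocallyUniformlyOn_iff_forall_isCompact hs).2 fun K hKs hK ↦ ?_
  have hequi : EquicontinuousOn F K := fun x hx ↦
    (equicontinuousAt_of_forall_norm_le (hs.mem_nhds (hKs hx)) hF hM).equicontinuousWithinAt K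
  refine UniformOnFun.tendsto_iff_tendstoUniformlyOn.1
    ((EquicontinuousOn.tendsto_uniformOnFun_iff_pi' (𝔖 := {K}) (by simpa) (by simpa) l f).2 ?_)
    K rfl
  exact tendsto_pi_nhds.2 fun x ↦ hlim x (hKs (by simpa using x.2))

theorem exists_tendstoLocallyUniformlyOn_of_forall_norm_le [LocallyCompactSpace E] [ProperSpace G]
    (l : Ultrafilter ι) (hs : IsOpen s) (hF : ∀ i, DifferentiableOn ℂ (F i) s)
    (hM : ∀ i, ∀ z ∈ s, ‖F i z‖ ≤ M) : ∃ f, TendstoLocallyUniformlyOn F f l s := by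
  have hlim : ∀ z ∈ s, ∃ w, Tendsto (F · z) l (𝓝 w) := fun z hz ↦ by
    obtain ⟨w, -, hw⟩ := (isCompact_closedBall (0 : G) M).ultrafilter_le_nhds' (l.map (F · z))
      (Ultrafilter.mem_map.2 (univ_mem' fun i ↦ mem_closedBall_zero_iff.2 (hM i z hz)))
    exact ⟨w, hw⟩
  choose! f hf using hlim
  exact ⟨f, tendstoLocallyUniformlyOn_of_forall_norm_le hs hF hM hf⟩

end Normal

section Injective

theorem not_eventually_eq_of_injOn {α β : Type*} [TopologicalSpace α] {f : α → β} {s : Set α}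
    {x : α} [(𝓝[≠] x).NeBot] (hf : InjOn f s) (hs : s ∈ 𝓝 x) : ¬∀ᶠ y in 𝓝 x, f y = f x := by
  intro h
  have heq : ∀ᶠ y in 𝓝[≠] x, y = x := nhdsWithin_le_nhds <| by
    filter_upwards [h, hs] with y hy hys using hf hys (mem_of_mem_nhds hs) hy
  obtain ⟨y, hyx, hne⟩ := (heq.and self_mem_nhdsWithin).exists
  exact hne hyx

variable {f g : ℂ → ℂ} {s : Set ℂ} {z : ℂ}

theorem nhds_le_map_nhds_of_injOn (hs : IsOpen s) (hf : DifferentiableOn ℂ f s) (hinj : InjOn f s)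
    (hz : z ∈ s) : 𝓝 (f z) ≤ map f (𝓝 z) :=
  (hf.analyticAt (hs.mem_nhds hz)).eventually_constant_or_nhds_le_map_nhds.resolve_left
    (not_eventually_eq_of_injOn hinj (hs.mem_nhds hz))

theorem eventually_deriv_ne_zero_of_injOn (hs : IsOpen s) (hf : DifferentiableOn ℂ f s)
    (hinj : InjOn f s) (hz : z ∈ s) : ∀ᶠ w in 𝓝[≠] z, deriv f w ≠ 0 := by
  have hfz := hf.analyticAt (hs.mem_nhds hz)
  refine hfz.deriv.eventually_eq_zero_or_eventually_ne_zero.resolve_left fun h ↦ ?_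
  obtain ⟨r, hr, hball⟩ := Metric.eventually_nhds_iff_ball.1 (h.and (hs.mem_nhds hz))
  refine not_eventually_eq_of_injOn hinj (hs.mem_nhds hz) ?_
  filter_upwards [ball_mem_nhds z hr] with w hw
  exact isOpen_ball.is_const_of_deriv_eq_zero (convex_ball z r).isPreconnected
    (hf.mono fun v hv ↦ (hball v hv).2) (fun v hv ↦ (hball v hv).1) hw (mem_ball_self hr)

theorem continuousAt_of_leftInvOn (hs : IsOpen s) (hf : DifferentiableOn ℂ f s)
    (hgf : LeftInvOn g f s) (hz : z ∈ s) : ContinuousAt g (f z) := by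
  have hmap : Tendsto g (map f (𝓝 z)) (𝓝 z) := by
    refine tendsto_map'_iff.2 (tendsto_id.congr' ?_)
    filter_upwards [hs.mem_nhds hz] with w hw using (hgf hw).symm
  rw [ContinuousAt, hgf hz]
  exact hmap.mono_left (nhds_le_map_nhds_of_injOn hs hf hgf.injOn hz)

theorem differentiableAt_of_leftInvOn (hs : IsOpen s) (hf : DifferentiableOn ℂ f s)
    (hgf : LeftInvOn g f s) (hz : z ∈ s) : DifferentiableAt ℂ g (f z) := by
  have hcont {w : ℂ} (hw : w ∈ s) := continuousAt_of_leftInvOn hs hf hgf hw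
  have himage {w : ℂ} (hw : w ∈ s) : f '' s ∈ 𝓝 (f w) :=
    nhds_le_map_nhds_of_injOn hs hf hgf.injOn hw (image_mem_map (hs.mem_nhds hw))
  have hright {v : ℂ} (hv : v ∈ f '' s) : f (g v) = v := by
    obtain ⟨w, hw, rfl⟩ := hv
    rw [hgf hw]
  have htendsto : Tendsto g (𝓝[≠] (f z)) (𝓝[≠] z) := by
    refine tendsto_nhdsWithin_iff.2 ⟨?_, ?_⟩
    · simpa only [hgf hz] using (hcont hz).tendsto.mono_left nhdsWithin_le_nhds
    · filter_upwards [self_mem_nhdsWithin, nhdsWithin_le_nhds (himage hz)] with v hv hvs hgv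
      exact hv (by rw [mem_singleton_iff, ← hright hvs, hgv])
  refine (Complex.analyticAt_of_differentiable_on_punctured_nhds_of_continuousAt ?_
    (hcont hz)).differentiableAt
  filter_upwards [htendsto.eventually (eventually_deriv_ne_zero_of_injOn hs hf hgf.injOn hz),
    nhdsWithin_le_nhds (himage hz)]
  rintro _ hderiv ⟨w, hw, rfl⟩
  rw [hgf hw] at hderiv
  refine (HasDerivAt.of_local_left_inverse (f := f) (f' := deriv f w) (hcont hw) ?_ hderiv
    ?_).differentiableAt
  · rw [hgf hw]
    exact (hf.differentiableAt (hs.mem_nhds hw)).hasDerivAt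
  · filter_upwards [himage hw] with v hv using hright hv

theorem not_eventually_eq_of_deriv_ne_zero (hs : IsOpen s) (hsc : IsPreconnected s)
    (hf : DifferentiableOn ℂ f s) (hz : z ∈ s) (hderiv : deriv f z ≠ 0) {a : ℂ} (ha : a ∈ s) :
    ¬∀ᶠ w in 𝓝 a, f w = f a := by
  intro h
  have hconst : EqOn f (fun _ ↦ f a) s :=
    (hf.analyticOnNhd hs).eqOn_of_preconnected_of_eventuallyEq analyticOnNhd_const hsc ha h
  refine hderiv ?_
  rw [(hconst.eventuallyEq_of_mem (hs.mem_nhds hz)).deriv_eq, deriv_const]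

theorem exists_closedBall_forall_mem_sphere_le_norm_sub (hf : AnalyticAt ℂ f z)
    (hne : ¬∀ᶠ w in 𝓝 z, f w = f z) (hs : s ∈ 𝓝 z) :
    ∃ r > 0, ∃ ε > 0, closedBall z r ⊆ s ∧
      ∀ w ∈ sphere z r, ε ≤ ‖f w - f z‖ := by
  have hpunct : ∀ᶠ w in 𝓝 z, w ≠ z → f w ≠ f z := eventually_nhdsWithin_iff.1
    ((hf.eventually_eq_or_eventually_ne analyticAt_const).resolve_left hne)
  obtain ⟨r, hr, hball⟩ := Metric.nhds_basis_closedBall.mem_iff.1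
    (inter_mem hs (inter_mem hpunct (hf.eventually_continuousAt)))
  have hcont : ContinuousOn f (closedBall z r) := fun w hw ↦ (hball hw).2.2.continuousWithinAt
  obtain ⟨w₀, hw₀, hmin⟩ := (isCompact_sphere z r).exists_isMinOn
    (NormedSpace.sphere_nonempty.2 hr.le)
    ((hcont.mono sphere_subset_closedBall).sub continuousOn_const).norm
  refine ⟨r, hr, ‖f w₀ - f z‖, norm_pos_iff.2 (sub_ne_zero.2 ?_),
    hball.trans inter_subset_left, fun w hw ↦ hmin hw⟩
  exact (hball (sphere_subset_closedBall hw₀)).2.1 (ne_of_mem_sphere hw₀ hr.ne')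

-- Hurwitz: on a small circle around `a` the `F i` stay away from `F i a`, so by the open mapping
-- theorem `F i` takes the value `F i b` inside the circle.
theorem injOn_of_tendstoLocallyUniformlyOn {ι : Type*} {l : Filter ι} [l.NeBot] {F : ι → ℂ → ℂ}
    (hs : IsOpen s) (hsc : IsPreconnected s) (hF : ∀ i, DifferentiableOn ℂ (F i) s)
    (hinj : ∀ i, InjOn (F i) s) (hlim : TendstoLocallyUniformlyOn F f l s) (hz : z ∈ s)
    (hderiv : deriv f z ≠ 0) : InjOn f s := by
  intro a ha b hb hab
  by_contra hne
  have hf : DifferentiableOn ℂ f s := hlim.differentiableOn (Eventually.of_forall hF) hs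
  obtain ⟨r, hr, ε, hε, hrs, hlower⟩ := exists_closedBall_forall_mem_sphere_le_norm_sub
    (hf.analyticAt (hs.mem_nhds ha)) (not_eventually_eq_of_deriv_ne_zero hs hsc hf hz hderiv ha)
    (inter_mem (hs.mem_nhds ha) (isOpen_ne.mem_nhds hne))
  have hrs' : closedBall a r ⊆ s := hrs.trans inter_subset_left
  have hunif : ∀ᶠ i in l, ∀ w ∈ sphere a r, dist (f w) (F i w) < ε / 4 :=
    Metric.tendstoUniformlyOn_iff.1 ((tendstoLocallyUniformlyOn_iff_forall_isCompact hs).1 hlim _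
      (sphere_subset_closedBall.trans hrs') (isCompact_sphere a r)) _ (by positivity)
  have hnear {c : ℂ} (hc : c ∈ s) : ∀ᶠ i in l, dist (F i c) (f c) < ε / 8 :=
    Metric.tendsto_nhds.1 (hlim.tendsto_at hc) _ (by positivity)
  obtain ⟨i, hsphere, hia, hib⟩ := (hunif.and ((hnear ha).and (hnear hb))).exists
  have hi_lower : ∀ w ∈ sphere a r, ε / 2 ≤ ‖F i w - F i a‖ := fun w hw ↦ by
    rw [← dist_eq_norm]
    have := hlower w hw
    rw [← dist_eq_norm] at this
    linarith [dist_triangle4 (f w) (F i w) (F i a) (f a), hsphere w hw]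
  have hi_mem : F i b ∈ ball (F i a) (ε / 2 / 2) := by
    rw [mem_ball]
    rw [← hab, dist_comm] at hib
    linarith [dist_triangle (F i a) (f a) (F i b), dist_comm (F i a) (F i b)]
  have hi_diff : DiffContOnCl ℂ (F i) (ball a r) :=
    DifferentiableOn.diffContOnCl ((hF i).mono (by rwa [closure_ball a hr.ne']))
  obtain ⟨w, hw, hwb⟩ := hi_diff.ball_subset_image_closedBall hr hi_lower
    (not_eventually.1 (not_eventually_eq_of_injOn (hinj i) (hs.mem_nhds ha))) hi_mem
  exact (hrs hw).2 (hinj i (hrs' hw) hb hwb)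

end Injective

section Koebe

variable {F f g : ℂ → ℂ} {s : Set ℂ} {z₀ a : ℂ}

theorem PolynomiallyApproximableOn.discMobius_comp (hs : HasConnectedComplExhaustion s)
    (hf : PolynomiallyApproximableOn f s) (hlt : ∀ z ∈ s, ‖f z‖ < 1) (ha : ‖a‖ < 1) :
    PolynomiallyApproximableOn (fun z ↦ discMobius a (f z)) s := by
  have hnum : PolynomiallyApproximableOn (fun z ↦ f z - a) s :=
    hf.entire_comp (f := fun w ↦ w - a) (by fun_prop)
  have hden : PolynomiallyApproximableOn (fun z ↦ 1 - conj a * f z) s :=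
    hf.entire_comp (f := fun w ↦ 1 - conj a * w) (by fun_prop)
  exact hnum.mul (hden.inv hs fun z hz ↦ one_sub_conj_mul_ne_zero ha (hlt z hz))

-- With `t = ‖g z₀‖`, so that `t ^ 2 = ‖a‖`, the two sides have ratio `(1 + t ^ 2) / (2 * t)`.
theorem norm_deriv_lt_of_sq_eq_discMobius (hF : DifferentiableAt ℂ F z₀) (hF0 : F z₀ = 0)
    (hderiv : deriv F z₀ ≠ 0) (ha : ‖a‖ < 1) (ha0 : a ≠ 0) (hg : DifferentiableAt ℂ g z₀)
    (hsq : ∀ᶠ z in 𝓝 z₀, g z ^ 2 = discMobius a (F z)) :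
    ‖deriv F z₀‖ < ‖deriv (fun z ↦ discMobius (g z₀) (g z)) z₀‖ := by
  have hta : ‖g z₀‖ ^ 2 = ‖a‖ := by
    rw [← norm_pow, hsq.self_of_nhds, hF0]
    simp [discMobius]
  set t := ‖g z₀‖
  have ht0 : 0 < t := by
    refine lt_of_le_of_ne (norm_nonneg _) fun h ↦ ha0 ?_
    rw [← norm_eq_zero, ← hta, ← h, zero_pow two_ne_zero]
  have ht1 : t < 1 := by nlinarith
  have hderiv_eq : 2 * t * ‖deriv g z₀‖ = ‖deriv F z₀‖ * (1 - (t ^ 2) ^ 2) := by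
    have h : 2 * g z₀ * deriv g z₀ = deriv F z₀ * ((1 - ‖a‖ ^ 2 : ℝ) : ℂ) := by
      have h₁ := (hasDerivAt_discMobius_comp ha (by simp [hF0]) hF.hasDerivAt).congr_of_eventuallyEq
        hsq
      simpa [hF0] using (hg.hasDerivAt.fun_pow 2).unique h₁
    have h₂ := congrArg norm h
    rwa [norm_mul, norm_mul, norm_mul, Complex.norm_real, ← hta, Complex.norm_ofNat,
      Real.norm_of_nonneg (by nlinarith [sq_nonneg t])] at h₂
  have hlt : 2 * t * (‖deriv F z₀‖ * (1 - t ^ 2)) < 2 * t * ‖deriv g z₀‖ := by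
    have hpos : 0 < ‖deriv F z₀‖ * (1 - t ^ 2) :=
      mul_pos (norm_pos_iff.2 hderiv) (by nlinarith)
    rw [hderiv_eq]
    nlinarith [mul_pos hpos (pow_pos (sub_pos.2 ht1) 2)]
  rw [norm_deriv_discMobius_comp ht1 hg, lt_div_iff₀ (by nlinarith)]
  exact lt_of_mul_lt_mul_left hlt (by positivity)

/-- A competitor in Koebe's extremal problem for the pointed domain `(s, z₀)`. Polynomial
approximability takes the place of holomorphy, so that square roots of competitors exist. -/
structure IsKoebeCompetitor (s : Set ℂ) (z₀ : ℂ) (F : ℂ → ℂ) : Prop where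
  polynomiallyApproximableOn : PolynomiallyApproximableOn F s
  injOn : InjOn F s
  norm_lt_one : ∀ z ∈ s, ‖F z‖ < 1
  eq_zero : F z₀ = 0

namespace IsKoebeCompetitor

theorem differentiableOn (hF : IsKoebeCompetitor s z₀ F) (hs : IsOpen s) :
    DifferentiableOn ℂ F s :=
  hF.polynomiallyApproximableOn.differentiableOn hs

theorem exists_norm_deriv_lt (hF : IsKoebeCompetitor s z₀ F) (hs : IsOpen s)
    (hsc : IsPreconnected s) (hse : HasConnectedComplExhaustion s) (hz₀ : z₀ ∈ s)
    (hderiv : deriv F z₀ ≠ 0) (ha : ‖a‖ < 1) (haF : a ∉ F '' s) :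
    ∃ G, IsKoebeCompetitor s z₀ G ∧ ‖deriv F z₀‖ < ‖deriv G z₀‖ := by
  have hne {z : ℂ} (hz : z ∈ s) : F z ≠ a := fun h ↦ haF ⟨z, hz, h⟩
  have hmob0 : ∀ z ∈ s, discMobius a (F z) ≠ 0 := fun z hz ↦
    div_ne_zero (sub_ne_zero.2 (hne hz)) (one_sub_conj_mul_ne_zero ha (hF.norm_lt_one z hz))
  obtain ⟨g, hg, hsq⟩ := PolynomiallyApproximableOn.exists_sq_eq hs hsc hse
    (hF.polynomiallyApproximableOn.discMobius_comp hse hF.norm_lt_one ha) hmob0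
  have hg1 : ∀ z ∈ s, ‖g z‖ < 1 := fun z hz ↦ by
    refine (pow_lt_one_iff_of_nonneg (norm_nonneg _) two_ne_zero).1 ?_
    rw [← norm_pow, hsq z hz]
    exact norm_discMobius_lt_one ha (hF.norm_lt_one z hz)
  have hginj : InjOn g s := fun x hx y hy hxy ↦ by
    have hFx := mem_ball_zero_iff.2 (hF.norm_lt_one x hx)
    have hFy := mem_ball_zero_iff.2 (hF.norm_lt_one y hy)
    refine hF.injOn hx hy (injOn_discMobius ha hFx hFy ?_)
    rw [← hsq x hx, ← hsq y hy, hxy]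
  have hmaps : MapsTo g s (ball 0 1) := fun z hz ↦ mem_ball_zero_iff.2 (hg1 z hz)
  refine ⟨fun z ↦ discMobius (g z₀) (g z),
    ⟨hg.discMobius_comp hse hg1 (hg1 z₀ hz₀), (injOn_discMobius (hg1 z₀ hz₀)).comp hginj hmaps,
      fun z hz ↦ norm_discMobius_lt_one (hg1 z₀ hz₀) (hg1 z hz), discMobius_self _⟩, ?_⟩
  have hdiff {h : ℂ → ℂ} (hh : PolynomiallyApproximableOn h s) : DifferentiableAt ℂ h z₀ :=
    (hh.differentiableOn hs).differentiableAt (hs.mem_nhds hz₀)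
  refine norm_deriv_lt_of_sq_eq_discMobius (hdiff hF.polynomiallyApproximableOn) hF.eq_zero hderiv
    ha (fun h ↦ hne hz₀ (hF.eq_zero.trans h.symm)) (hdiff hg) ?_
  filter_upwards [hs.mem_nhds hz₀] with z hz using hsq z hz

theorem of_tendstoLocallyUniformlyOn {ι : Type*} {l : Filter ι} [l.NeBot] {F : ι → ℂ → ℂ}
    (hs : IsOpen s) (hsc : IsPreconnected s) (hz₀ : z₀ ∈ s)
    (hF : ∀ i, IsKoebeCompetitor s z₀ (F i)) (hlim : TendstoLocallyUniformlyOn F f l s)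
    (hderiv : deriv f z₀ ≠ 0) : IsKoebeCompetitor s z₀ f := by
  have hFd i : DifferentiableOn ℂ (F i) s := (hF i).differentiableOn hs
  have hf : DifferentiableOn ℂ f s := hlim.differentiableOn (Eventually.of_forall hFd) hs
  have hinj : InjOn f s :=
    injOn_of_tendstoLocallyUniformlyOn hs hsc hFd (fun i ↦ (hF i).injOn) hlim hz₀ hderiv
  have hle : MapsTo f s (closedBall 0 1) := fun z hz ↦
    isClosed_closedBall.mem_of_tendsto (hlim.tendsto_at hz)
      (Eventually.of_forall fun i ↦ mem_closedBall_zero_iff.2 ((hF i).norm_lt_one z hz).le)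
  have hlt : ∀ z ∈ s, ‖f z‖ < 1 := fun z hz ↦ by
    have himage : f '' s ∈ 𝓝 (f z) :=
      nhds_le_map_nhds_of_injOn hs hf hinj hz (image_mem_map (hs.mem_nhds hz))
    rw [← mem_ball_zero_iff, ← interior_closedBall (0 : ℂ) one_ne_zero, mem_interior_iff_mem_nhds]
    exact mem_of_superset himage hle.image_subset
  refine ⟨.of_tendstoLocallyUniformlyOn (fun i ↦ (hF i).polynomiallyApproximableOn) hlim, hinj,
    hlt, tendsto_nhds_unique (hlim.tendsto_at hz₀) ?_⟩
  simpa only [fun i ↦ (hF i).eq_zero] using tendsto_const_nhds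

theorem norm_deriv_le (hF : IsKoebeCompetitor s z₀ F) (hs : IsOpen s) {r : ℝ} (hr : 0 < r)
    (hball : ball z₀ r ⊆ s) : ‖deriv F z₀‖ ≤ 1 / r := by
  simpa [hF.eq_zero] using norm_deriv_le_of_forall_norm_lt_one hr
    ((hF.differentiableOn hs).mono hball) fun z hz ↦ hF.norm_lt_one z (hball hz)

end IsKoebeCompetitor

theorem exists_isKoebeCompetitor_deriv_ne_zero (hs : IsBounded s) (z₀ : ℂ) :
    ∃ F, IsKoebeCompetitor s z₀ F ∧ deriv F z₀ ≠ 0 := by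
  obtain ⟨B, hB, hsB⟩ := hs.subset_ball_lt 0 z₀
  have hB' : (B : ℂ)⁻¹ ≠ 0 := inv_ne_zero (by exact_mod_cast hB.ne')
  refine ⟨fun z ↦ (B : ℂ)⁻¹ * (z - z₀), ⟨?_, ?_, ?_, by simp⟩, ?_⟩
  · exact (PolynomiallyApproximableOn.id s).entire_comp (f := fun z ↦ (B : ℂ)⁻¹ * (z - z₀))
      (by fun_prop)
  · exact fun x _ y _ hxy ↦ sub_left_injective (mul_left_cancel₀ hB' hxy)
  · intro z hz
    rw [norm_mul, norm_inv, Complex.norm_real, Real.norm_of_nonneg hB.le, inv_mul_lt_iff₀ hB,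
      mul_one]
    exact mem_ball_iff_norm.1 (hsB hz)
  · simpa using hB.ne'

theorem exists_isKoebeCompetitor_forall_norm_deriv_le (hs : IsOpen s) (hsc : IsPreconnected s)
    (hsb : IsBounded s) (hz₀ : z₀ ∈ s) : ∃ F, IsKoebeCompetitor s z₀ F ∧ deriv F z₀ ≠ 0 ∧
      ∀ G, IsKoebeCompetitor s z₀ G → ‖deriv G z₀‖ ≤ ‖deriv F z₀‖ := by
  set D : Set ℝ := (fun F ↦ ‖deriv F z₀‖) '' {F | IsKoebeCompetitor s z₀ F}
  obtain ⟨r, hr, hball⟩ := Metric.isOpen_iff.1 hs z₀ hz₀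
  have hbdd : BddAbove D := ⟨1 / r, forall_mem_image.2 fun F hF ↦ hF.norm_deriv_le hs hr hball⟩
  obtain ⟨F₀, hF₀, hderiv₀⟩ := exists_isKoebeCompetitor_deriv_ne_zero hsb z₀
  have hD {G : ℂ → ℂ} (hG : IsKoebeCompetitor s z₀ G) : ‖deriv G z₀‖ ≤ sSup D :=
    le_csSup hbdd ⟨G, hG, rfl⟩
  obtain ⟨u, -, hu, huD⟩ := exists_seq_tendsto_sSup (S := D) ⟨_, F₀, hF₀, rfl⟩ hbdd
  choose F hF hFu using huD
  have hFd n : DifferentiableOn ℂ (F n) s := (hF n).differentiableOn hs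
  obtain ⟨f, hlim⟩ := exists_tendstoLocallyUniformlyOn_of_forall_norm_le (hyperfilter ℕ) hs hFd
    fun n z hz ↦ ((hF n).norm_lt_one z hz).le
  have hf : ‖deriv f z₀‖ = sSup D := by
    have hlim' := ((hlim.deriv (Eventually.of_forall hFd) hs).tendsto_at hz₀).norm
    have hsup : Tendsto (fun n ↦ ‖deriv (F n) z₀‖) (hyperfilter ℕ) (𝓝 (sSup D)) := by
      simpa only [hFu] using hu.mono_left Nat.hyperfilter_le_atTop
    exact tendsto_nhds_unique hlim' hsup
  rw [← hf] at hD
  have hderiv : deriv f z₀ ≠ 0 := norm_pos_iff.1 ((norm_pos_iff.2 hderiv₀).trans_le (hD hF₀))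
  exact ⟨f, .of_tendstoLocallyUniformlyOn hs hsc hz₀ hF hlim hderiv, hderiv, fun G hG ↦ hD hG⟩

theorem exists_injOn_image_eq_ball (hs : IsOpen s) (hsc : IsConnected s) (hsb : IsBounded s)
    (hse : HasConnectedComplExhaustion s) :
    ∃ F : ℂ → ℂ, DifferentiableOn ℂ F s ∧ InjOn F s ∧ F '' s = ball 0 1 := by
  obtain ⟨z₀, hz₀⟩ := hsc.nonempty
  obtain ⟨F, hF, hderiv, hmax⟩ :=
    exists_isKoebeCompetitor_forall_norm_deriv_le hs hsc.isPreconnected hsb hz₀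
  refine ⟨F, hF.differentiableOn hs, hF.injOn, Subset.antisymm ?_ fun a ha ↦ ?_⟩
  · exact image_subset_iff.2 fun z hz ↦ mem_ball_zero_iff.2 (hF.norm_lt_one z hz)
  · by_contra haF
    obtain ⟨G, hG, hlt⟩ := hF.exists_norm_deriv_lt hs hsc.isPreconnected hse hz₀ hderiv
      (mem_ball_zero_iff.1 ha) haF
    exact (hmax G hG).not_gt hlt

theorem exists_inverse_of_image_eq_ball (hs : IsOpen s) (hF : DifferentiableOn ℂ F s)
    (hinj : InjOn F s) (himage : F '' s = ball 0 1) :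
    ∃ f, DifferentiableOn ℂ f (ball 0 1) ∧ InvOn f F s (ball 0 1) ∧ MapsTo f (ball 0 1) s := by
  have hleft : LeftInvOn (Function.invFunOn F s) F s := hinj.leftInvOn_invFunOn
  refine ⟨Function.invFunOn F s, ?_, ⟨hleft, ?_⟩, ?_⟩ <;> rw [← himage]
  · rintro _ ⟨z, hz, rfl⟩
    exact (differentiableAt_of_leftInvOn hs hF hleft hz).differentiableWithinAt
  · exact fun w hw ↦ Function.invFunOn_eq hw
  · exact fun w hw ↦ Function.invFunOn_mem hw

end Koebe

/-! ### Analytic arcs in real-analytic sets -/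

theorem ne_zero_of_iterated_hasDerivAt_ne_zero {S : Set ℝ} {x₀ : ℝ} (hS : S.OrdConnected)
    (hx₀ : x₀ ∈ S) {k : ℕ} {φ : ℕ → ℝ → ℝ} (hφ : ∀ j, ∀ t ∈ S, HasDerivAt (φ j) (φ (j + 1) t) t)
    (hzero : ∀ j < k, φ j x₀ = 0) (hk : ∀ t ∈ S, φ k t ≠ 0) :
    ∀ t ∈ S, t ≠ x₀ → φ 0 t ≠ 0 := by
  induction k generalizing φ with
  | zero => exact fun t ht _ ↦ hk t ht
  | succ k ih =>
    intro t ht htx hzt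
    have hderiv : ∀ s ∈ S, s ≠ x₀ → φ 1 s ≠ 0 :=
      ih (φ := fun j ↦ φ (j + 1)) (fun j ↦ hφ (j + 1)) (fun j hj ↦ hzero (j + 1) (by lia)) hk
    have hrolle : ∀ a ∈ S, ∀ b ∈ S, a < b → φ 0 a = φ 0 b → ∃ c ∈ Ioo a b, φ 1 c = 0 := by
      intro a ha b hb hab heq
      exact exists_hasDerivAt_eq_zero hab
        (fun x hx ↦ (hφ 0 x (hS.out ha hb hx)).continuousAt.continuousWithinAt) heq
        fun x hx ↦ hφ 0 x (hS.out ha hb (Ioo_subset_Icc_self hx))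
    have h₀ : φ 0 x₀ = 0 := hzero 0 k.succ_pos
    rcases lt_or_gt_of_ne htx with hlt | hlt
    · obtain ⟨c, hc, hc0⟩ := hrolle t ht x₀ hx₀ hlt (hzt.trans h₀.symm)
      exact hderiv c (hS.out ht hx₀ (Ioo_subset_Icc_self hc)) hc.2.ne hc0
    · obtain ⟨c, hc, hc0⟩ := hrolle x₀ hx₀ t ht hlt (h₀.trans hzt.symm)
      exact hderiv c (hS.out hx₀ ht (Ioo_subset_Icc_self hc)) hc.1.ne' hc0

section Complexification

variable {E : Type*} [NormedAddCommGroup E] [NormedSpace ℂ E]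

/-- The power series with complex variable that has the same coefficients as the given power
series with real variable. -/
def complexifiedSeries (p : FormalMultilinearSeries ℝ ℝ E) : FormalMultilinearSeries ℂ ℂ E :=
  fun n ↦ ContinuousMultilinearMap.mkPiRing ℂ (Fin n) (p.coeff n)

theorem coeff_complexifiedSeries (p : FormalMultilinearSeries ℝ ℝ E) (n : ℕ) :
    (complexifiedSeries p).coeff n = p.coeff n := by
  exact (ContinuousMultilinearMap.mkPiRing_apply ..).trans (by simp)

theorem radius_complexifiedSeries (p : FormalMultilinearSeries ℝ ℝ E) :
    (complexifiedSeries p).radius = p.radius := by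
  have hnorm (n : ℕ) : ‖complexifiedSeries p n‖ = ‖p n‖ := by
    rw [FormalMultilinearSeries.norm_apply_eq_norm_coef,
      FormalMultilinearSeries.norm_apply_eq_norm_coef, coeff_complexifiedSeries]
  simp only [FormalMultilinearSeries.radius, hnorm]

theorem exists_analyticAt_complexification [CompleteSpace E] {f : ℝ → E} {s : ℝ}
    (hf : AnalyticAt ℝ f s) :
    ∃ g : ℂ → E, AnalyticAt ℂ g s ∧ ∀ᶠ t : ℝ in 𝓝 s, g t = f t := by
  obtain ⟨p, hp⟩ := hf
  have hball := (complexifiedSeries p).hasFPowerSeriesOnBall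
    (by simpa only [radius_complexifiedSeries] using hp.radius_pos)
  have hg : HasFPowerSeriesAt (fun z ↦ (complexifiedSeries p).sum (z - s))
      (complexifiedSeries p) (s : ℂ) := by
    simpa using (hball.comp_sub (s : ℂ)).hasFPowerSeriesAt
  refine ⟨_, hg.analyticAt, ?_⟩
  have hseries : ∀ᶠ t : ℝ in 𝓝 s, HasSum (fun n ↦ ((t - s : ℝ) : ℂ) ^ n • p.coeff n)
      ((complexifiedSeries p).sum (t - s)) := by
    have := Complex.continuous_ofReal.continuousAt.eventually (hasFPowerSeriesAt_iff'.1 hg)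
    simpa [coeff_complexifiedSeries] using this
  filter_upwards [hseries, hasFPowerSeriesAt_iff'.1 hp] with t htg htf
  refine htg.unique (htf.congr_fun fun n ↦ ?_)
  rw [← Complex.ofReal_pow, Complex.coe_smul]

end Complexification

section IteratedDirDeriv

variable {E F : Type*} [NormedAddCommGroup E] [NormedSpace ℝ E] [NormedAddCommGroup F]
  [NormedSpace ℝ F] {f : E → F} {s : Set E} {x : E}

/-- The `k`-th iterated derivative of `f` at `x` in the direction `v`. -/
def iteratedDirDeriv (f : E → F) (v : E) (k : ℕ) (x : E) : F :=
  iteratedFDeriv ℝ k f x fun _ ↦ v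

theorem iteratedDirDeriv_zero (f : E → F) (v : E) : iteratedDirDeriv f v 0 = f := by
  ext x
  exact iteratedFDeriv_zero_apply _

theorem analyticAt_iteratedFDeriv [CompleteSpace F] (hf : AnalyticAt ℝ f x) (k : ℕ) :
    AnalyticAt ℝ (iteratedFDeriv ℝ k f) x := by
  obtain ⟨r, hr, hball⟩ := hf.exists_ball_analyticOnNhd
  exact hball.iteratedFDeriv k x (mem_ball_self hr)

theorem analyticAt_iteratedDirDeriv [CompleteSpace F] (hf : AnalyticAt ℝ f x) (v : E) (k : ℕ) :
    AnalyticAt ℝ (iteratedDirDeriv f v k) x :=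
  ((ContinuousMultilinearMap.apply ℝ (fun _ : Fin k ↦ E) F fun _ ↦ v).analyticAt _).comp
    (analyticAt_iteratedFDeriv hf k)

theorem fderiv_iteratedDirDeriv [CompleteSpace F] (hf : AnalyticAt ℝ f x) (v : E) (k : ℕ) :
    fderiv ℝ (iteratedDirDeriv f v k) x v = iteratedDirDeriv f v (k + 1) x := by
  have h := (ContinuousMultilinearMap.apply ℝ (fun _ : Fin k ↦ E) F fun _ ↦ v).hasFDerivAt.comp x
    (analyticAt_iteratedFDeriv hf k).differentiableAt.hasFDerivAt
  exact DFunLike.congr_fun h.fderiv v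

theorem hasDerivAt_iteratedDirDeriv [CompleteSpace F] {y v : E} {t : ℝ}
    (hf : AnalyticAt ℝ f (y + t • v)) (k : ℕ) :
    HasDerivAt (fun t : ℝ ↦ iteratedDirDeriv f v k (y + t • v))
      (iteratedDirDeriv f v (k + 1) (y + t • v)) t := by
  have hline : HasDerivAt (fun t : ℝ ↦ y + t • v) v t := by
    simpa using ((hasDerivAt_id t).smul_const v).const_add y
  rw [← fderiv_iteratedDirDeriv hf]
  exact (analyticAt_iteratedDirDeriv hf v k).differentiableAt.hasFDerivAt.comp_hasDerivAt t hline

theorem exists_iteratedDirDeriv_ne_zero [CompleteSpace F] (hf : AnalyticOnNhd ℝ f s)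
    (hs : IsPreconnected s) (hne : ∃ z ∈ s, f z ≠ 0) (hx : x ∈ s) :
    ∃ k v, iteratedDirDeriv f v k x ≠ 0 := by
  by_contra! hzero
  obtain ⟨z, hz, hfz⟩ := hne
  obtain ⟨p, r, hp⟩ := hf x hx
  refine hfz (hf.eqOn_of_preconnected_of_eventuallyEq (fun z _ ↦ analyticAt_const) hs hx ?_ hz)
  filter_upwards [Metric.eball_mem_nhds x hp.r_pos] with y hy
  have hsum := hp.hasSum_iteratedFDeriv (y := y - x) (by
    simpa [edist_eq_enorm_sub] using hy)
  rw [add_sub_cancel] at hsum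
  refine hsum.unique (hasSum_zero.congr_fun fun n ↦ ?_)
  rw [show iteratedFDeriv ℝ n f x (fun _ ↦ y - x) = 0 from hzero n (y - x), smul_zero]

theorem exists_ball_forall_line_eq_zero {σ : E → ℝ} {a v : E} {k : ℕ} (hσ : AnalyticAt ℝ σ a)
    (hk : iteratedDirDeriv σ v k a ≠ 0) :
    ∃ r > 0, ∀ y ∈ ball a r, (∀ j < k, iteratedDirDeriv σ v j y = 0) →
      ∀ t : ℝ, y + t • v ∈ ball a r → σ (y + t • v) = 0 → t = 0 := by
  obtain ⟨r, hr, hball⟩ := Metric.eventually_nhds_iff_ball.1 (hσ.eventually_analyticAt.and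
    ((analyticAt_iteratedDirDeriv hσ v k).continuousAt.eventually_ne hk))
  refine ⟨r, hr, fun y hy hyzero t ht hσt ↦ ?_⟩
  set S : Set ℝ := {t | y + t • v ∈ ball a r}
  have hS : S.OrdConnected := by
    have hpreimage : S = (AffineMap.lineMap y (y + v) : ℝ →ᵃ[ℝ] E) ⁻¹' ball a r := by
      ext t
      simp [S, AffineMap.lineMap_apply, add_comm]
    rw [hpreimage]
    exact ((convex_ball a r).affine_preimage _).ordConnected
  by_contra ht0
  refine ne_zero_of_iterated_hasDerivAt_ne_zero hS (x₀ := 0) (k := k)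
    (φ := fun j t ↦ iteratedDirDeriv σ v j (y + t • v)) ?_
    (fun j t ht ↦ hasDerivAt_iteratedDirDeriv (hball _ ht).1 j) ?_ (fun t ht ↦ (hball _ ht).2) t ht
    ht0 ?_
  · simpa [S] using hy
  · simpa using hyzero
  · rwa [iteratedDirDeriv_zero]

theorem exists_iteratedDirDeriv_succ_ne_zero_and_forall_le_eq_zero [CompleteSpace F]
    (hf : AnalyticOnNhd ℝ f s) (hs : IsPreconnected s) (hne : ∃ z ∈ s, f z ≠ 0)
    {A : Set E} (hAs : A ⊆ s) (hA : A.Nonempty) (hfA : ∀ z ∈ A, f z = 0) :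
    ∃ k, ∃ a ∈ A, ∃ v, iteratedDirDeriv f v (k + 1) a ≠ 0 ∧
      ∀ j ≤ k, ∀ z ∈ A, iteratedDirDeriv f v j z = 0 := by
  classical
  have hex : ∃ k, ∃ a ∈ A, ∃ v, iteratedDirDeriv f v k a ≠ 0 := by
    obtain ⟨a, ha⟩ := hA
    obtain ⟨k, v, hkv⟩ := exists_iteratedDirDeriv_ne_zero hf hs hne (hAs ha)
    exact ⟨k, a, ha, v, hkv⟩
  have hpos : Nat.find hex ≠ 0 := by
    rw [Ne, Nat.find_eq_zero]
    rintro ⟨a, ha, v, hav⟩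
    exact hav (by rw [iteratedDirDeriv_zero]; exact hfA a ha)
  obtain ⟨k, hk⟩ := Nat.exists_eq_succ_of_ne_zero hpos
  obtain ⟨a, ha, v, hav⟩ := hk ▸ Nat.find_spec hex
  refine ⟨k, a, ha, v, hav, fun j hj z hz ↦ ?_⟩
  by_contra hjz
  exact Nat.find_min hex (by lia) ⟨z, hz, v, hjz⟩

end IteratedDirDeriv

theorem exists_clm_ker_subset_line {v : ℂ} (hv : v ≠ 0) :
    ∃ X : ℂ →L[ℝ] ℝ, ∀ z, X z = 0 → ∃ t : ℝ, z = t • v := by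
  refine ⟨Complex.imCLM.comp (ContinuousLinearMap.mul ℝ ℂ v⁻¹), fun z hz ↦ ?_⟩
  have him : (v⁻¹ * z).im = 0 := hz
  refine ⟨(v⁻¹ * z).re, ?_⟩
  rw [Complex.real_smul, show ((v⁻¹ * z).re : ℂ) = v⁻¹ * z from Complex.ext rfl him.symm]
  field_simp

open scoped ContDiff in
theorem exists_analyticAt_section {E F G : Type*} [NormedAddCommGroup E] [NormedSpace ℝ E]
    [CompleteSpace E] [NormedAddCommGroup F] [NormedSpace ℝ F] [CompleteSpace F]
    [NormedAddCommGroup G] [NormedSpace ℝ G] [CompleteSpace G] {τ : E → F} {X : E →L[ℝ] G}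
    {a : E} (hτ : AnalyticAt ℝ τ a) (hτa : τ a = 0)
    (hbij : Function.Bijective (X.prod (fderiv ℝ τ a))) :
    ∃ Ξ : G → E, Ξ (X a) = a ∧ AnalyticAt ℝ Ξ (X a) ∧ (∀ᶠ s in 𝓝 (X a), X (Ξ s) = s) ∧
      ∀ᶠ z in 𝓝 a, τ z = 0 → Ξ (X z) = z := by
  set Θ : E → G × F := fun z ↦ (X z, τ z)
  let e := ContinuousLinearEquiv.ofBijective (X.prod (fderiv ℝ τ a))
    (LinearMap.ker_eq_bot.2 hbij.1) (LinearMap.range_eq_top.2 hbij.2)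
  have hΘ : ContDiffAt ℝ ω Θ a := ((X.analyticAt a).prod hτ).contDiffAt
  have hΘ' : HasFDerivAt Θ (e : E →L[ℝ] G × F) a :=
    X.hasFDerivAt.prodMk hτ.differentiableAt.hasFDerivAt
  have hω : (ω : WithTop ℕ∞) ≠ 0 := by simp
  set Φ := hΘ.toOpenPartialHomeomorph Θ hΘ' hω
  have ha : a ∈ Φ.source := hΘ.mem_toOpenPartialHomeomorph_source hΘ' hω
  have hΘa : Θ a = (X a, 0) := by simp [Θ, hτa]
  have hsymm : AnalyticAt ℝ Φ.symm (X a, 0) := hΘa ▸ (hΘ.to_localInverse hΘ' hω).analyticAt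
  have hmk : AnalyticAt ℝ (fun s : G ↦ (s, (0 : F))) (X a) := analyticAt_id.prod analyticAt_const
  have htarget : ∀ᶠ s in 𝓝 (X a), (s, (0 : F)) ∈ Φ.target :=
    hmk.continuousAt.eventually_mem (Φ.open_target.mem_nhds (hΘa ▸ Φ.map_source ha))
  refine ⟨fun s ↦ Φ.symm (s, 0), ?_, AnalyticAt.comp (g := Φ.symm) hsymm hmk, ?_, ?_⟩
  · exact (congrArg Φ.symm hΘa).symm.trans (Φ.left_inv ha)
  · filter_upwards [htarget] with s hs
    exact congrArg Prod.fst (Φ.right_inv hs)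
  · filter_upwards [Φ.open_source.mem_nhds ha] with z hz hτz
    rw [← hτz]
    exact Φ.left_inv hz

-- If the section left the preconnected set at parameters on both sides of `X a`, the piece of the
-- set between those parameters would be clopen.
theorem frequently_eventually_section_mem {α : Type*} [TopologicalSpace α] [T2Space α]
    {X : α → ℝ} {Ξ : ℝ → α} {A : Set α} {a : α} (hX : Continuous X) (hΞa : Ξ (X a) = a)
    (hΞ : ∀ᶠ s in 𝓝 (X a), ContinuousAt Ξ s) (hXΞ : ∀ᶠ s in 𝓝 (X a), X (Ξ s) = s)
    (hΞX : ∀ᶠ z in 𝓝 a, z ∈ A → Ξ (X z) = z) (hA : IsPreconnected A) (ha : a ∈ A)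
    (hA2 : A.Nontrivial) : ∃ᶠ s₀ in 𝓝 (X a), ∀ᶠ s in 𝓝 s₀, Ξ s ∈ A := by
  intro hleave
  obtain ⟨b, hb, hba⟩ := hA2.exists_ne a
  obtain ⟨N, hN, hNo, haN⟩ := eventually_nhds_iff.1 hΞX
  have hΞN : ∀ᶠ s in 𝓝 (X a), Ξ s ∈ N :=
    hΞ.self_of_nhds.eventually_mem (hNo.mem_nhds (hΞa.symm ▸ haN))
  have hΞb : ∀ᶠ s in 𝓝 (X a), Ξ s ≠ b :=
    hΞ.self_of_nhds.eventually_ne (hΞa.symm ▸ hba.symm)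
  obtain ⟨ε, hε, hball⟩ := Metric.eventually_nhds_iff_ball.1
    (hleave.and (hΞ.and (hXΞ.and (hΞN.and hΞb))))
  have hexit : ∀ s ∈ ball (X a) ε, ∀ u ∈ 𝓝 s, ∃ s' ∈ u, Ξ s' ∉ A := fun s hs u hu ↦
    ((not_eventually.1 (hball s hs).1).and_eventually hu).exists.imp fun _ h ↦ h.symm
  rw [Real.ball_eq_Ioo] at hball hexit
  obtain ⟨s₁, hs₁, hs₁A⟩ := hexit (X a - ε / 2) ⟨by linarith, by linarith⟩
    (Ioo (X a - ε) (X a)) (Ioo_mem_nhds (by linarith) (by linarith))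
  obtain ⟨s₂, hs₂, hs₂A⟩ := hexit (X a + ε / 2) ⟨by linarith, by linarith⟩
    (Ioo (X a) (X a + ε)) (Ioo_mem_nhds (by linarith) (by linarith))
  have hIcc : ∀ s ∈ Icc s₁ s₂, s ∈ Ioo (X a - ε) (X a + ε) := fun s hs ↦
    ⟨hs₁.1.trans_le hs.1, hs.2.trans_lt hs₂.2⟩
  have hcompact : IsCompact (Ξ '' Icc s₁ s₂) := isCompact_Icc.image_of_continuousOn
    fun s hs ↦ (hball s (hIcc s hs)).2.1.continuousWithinAt
  have hcover : A ⊆ N ∩ X ⁻¹' Ioo s₁ s₂ ∪ (Ξ '' Icc s₁ s₂)ᶜ := by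
    rintro z hz
    refine or_iff_not_imp_right.2 fun hzΞ ↦ ?_
    obtain ⟨s, hs, rfl⟩ := not_not.1 hzΞ
    obtain ⟨-, -, hXs, hsN, -⟩ := hball s (hIcc s hs)
    refine ⟨hsN, ?_⟩
    rw [mem_preimage, hXs]
    exact ⟨hs.1.lt_of_ne (by rintro rfl; exact hs₁A hz),
      hs.2.lt_of_ne (by rintro rfl; exact hs₂A hz)⟩
  obtain ⟨z, hzA, ⟨hzN, hzX⟩, hzΞ⟩ := hA _ _ (hNo.inter (isOpen_Ioo.preimage hX))
    hcompact.isClosed.isOpen_compl hcover ⟨a, ha, haN, hs₁.2, hs₂.1⟩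
    ⟨b, hb, fun ⟨s, hs, hsb⟩ ↦ (hball s (hIcc s hs)).2.2.2.2 hsb⟩
  exact hzΞ ⟨X z, Ioo_subset_Icc_self hzX, hN z hzN hzA⟩

theorem deriv_ne_zero_of_clm_apply_eq {G : ℂ → ℂ} {X : ℂ →L[ℝ] ℝ} {s₀ : ℝ}
    (hG : DifferentiableAt ℂ G s₀) (hXG : ∀ᶠ s : ℝ in 𝓝 s₀, X (G s) = s) : deriv G s₀ ≠ 0 := by
  intro hzero
  have hderiv : HasDerivAt (fun s : ℝ ↦ X (G s)) (X (deriv G s₀)) s₀ :=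
    X.hasFDerivAt.comp_hasDerivAt s₀ hG.hasDerivAt.comp_ofReal
  have hone : X (deriv G s₀) = 1 :=
    hderiv.unique ((hasDerivAt_id s₀).congr_of_eventuallyEq hXG)
  simp [hzero] at hone

theorem eventually_im_eq_zero_of_clm_apply_eq {G : ℂ → ℂ} {X : ℂ →L[ℝ] ℝ} {s₀ : ℝ}
    (hG : AnalyticAt ℂ G s₀) (hXG : ∀ᶠ s : ℝ in 𝓝 s₀, X (G s) = s) :
    ∀ᶠ w in 𝓝 (s₀ : ℂ), G (X (G w)) = G w → w.im = 0 := by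
  have hstrict : HasStrictDerivAt G (deriv G s₀) s₀ :=
    hG.contDiffAt.hasStrictDerivAt (n := 1) one_ne_zero
  have hinv := hstrict.eventually_left_inverse
    (deriv_ne_zero_of_clm_apply_eq hG.differentiableAt hXG)
  have htendsto : Tendsto (fun w ↦ (X (G w) : ℂ)) (𝓝 (s₀ : ℂ)) (𝓝 (s₀ : ℂ)) := by
    have hcont : ContinuousAt (fun w ↦ (X (G w) : ℂ)) s₀ :=
      (Complex.continuous_ofReal.comp X.continuous).continuousAt.comp hG.continuousAt
    simpa only [ContinuousAt, hXG.self_of_nhds] using hcont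
  filter_upwards [hinv, htendsto.eventually hinv] with w hw hw' heq
  rw [← hw, ← heq, hw', Complex.ofReal_im]

/-- A holomorphic arc through `A` which straightens the zero set of `σ` along `A`: it maps a
real interval about `0` into `A`, and is off the zero set of `σ` at nearby nonreal points. -/
structure IsStraighteningArc (σ : ℂ → ℝ) (A : Set ℂ) (Γ : ℂ → ℂ) : Prop where
  analyticAt : AnalyticAt ℂ Γ 0
  deriv_ne_zero : deriv Γ 0 ≠ 0
  eventually_im_eq_zero : ∀ᶠ w in 𝓝 0, σ (Γ w) = 0 → w.im = 0
  eventually_mem : ∀ᶠ x : ℝ in 𝓝 0, Γ x ∈ A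

theorem IsStraighteningArc.exists_ball {σ : ℂ → ℝ} {A : Set ℂ} {Γ : ℂ → ℂ}
    (hΓ : IsStraighteningArc σ A Γ) :
    ∃ R > 0, (∀ w ∈ ball 0 R, AnalyticAt ℂ Γ w) ∧ (∀ w ∈ ball 0 R, deriv Γ w ≠ 0) ∧
      (∀ w ∈ ball 0 R, σ (Γ w) = 0 → w.im = 0) ∧ ∀ x : ℝ, |x| < R → Γ x ∈ A := by
  obtain ⟨R₁, hR₁, h₁⟩ := Metric.eventually_nhds_iff_ball.1 <|
    hΓ.analyticAt.eventually_analyticAt.and <|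
      (hΓ.analyticAt.deriv.continuousAt.eventually_ne hΓ.deriv_ne_zero).and
        hΓ.eventually_im_eq_zero
  obtain ⟨R₂, hR₂, h₂⟩ := Metric.eventually_nhds_iff_ball.1 hΓ.eventually_mem
  have hsub : ball (0 : ℂ) (min R₁ R₂) ⊆ ball 0 R₁ := ball_subset_ball (min_le_left _ _)
  refine ⟨min R₁ R₂, lt_min hR₁ hR₂, fun w hw ↦ (h₁ w (hsub hw)).1,
    fun w hw ↦ (h₁ w (hsub hw)).2.1, fun w hw ↦ (h₁ w (hsub hw)).2.2, fun x hx ↦ h₂ x ?_⟩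
  simpa using hx.trans_le (min_le_right _ _)

-- By Rolle's theorem, `A` can meet the nearby zeros of `σ` on a line in the direction `v` in at
-- most one point: on `A` the derivatives of order at most `k` vanish.
theorem exists_isStraighteningArc_of_section {σ : ℂ → ℝ} {A : Set ℂ} {a v : ℂ} {k : ℕ}
    {X : ℂ →L[ℝ] ℝ} {Ξ : ℝ → ℂ} (hσ : AnalyticAt ℝ σ a)
    (hk : iteratedDirDeriv σ v (k + 1) a ≠ 0)
    (hzero : ∀ j ≤ k, ∀ z ∈ A, iteratedDirDeriv σ v j z = 0)
    (hX : ∀ z, X z = 0 → ∃ t : ℝ, z = t • v) (hΞa : Ξ (X a) = a)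
    (hΞ : ∀ᶠ s in 𝓝 (X a), AnalyticAt ℝ Ξ s) (hXΞ : ∀ᶠ s in 𝓝 (X a), X (Ξ s) = s)
    (hΞA : ∃ᶠ s₀ in 𝓝 (X a), ∀ᶠ s in 𝓝 s₀, Ξ s ∈ A) :
    ∃ Γ : ℂ → ℂ, IsStraighteningArc σ A Γ := by
  obtain ⟨r, hr, hline⟩ := exists_ball_forall_line_eq_zero hσ hk
  have hΞr : ∀ᶠ s in 𝓝 (X a), Ξ s ∈ ball a r :=
    hΞ.self_of_nhds.continuousAt.eventually_mem (hΞa.symm ▸ ball_mem_nhds a hr)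
  obtain ⟨s₀, hs₀A, hs₀, hs₀X, hs₀r⟩ :=
    (hΞA.and_eventually (hΞ.and (hXΞ.eventually_nhds.and hΞr.eventually_nhds))).exists
  obtain ⟨G, hG, hGΞ⟩ := exists_analyticAt_complexification hs₀
  have hXG : ∀ᶠ s : ℝ in 𝓝 s₀, X (G s) = s := by
    filter_upwards [hGΞ, hs₀X] with s hs hsX
    rw [hs, hsX]
  have hXG₀ : Tendsto (fun w ↦ X (G w)) (𝓝 (s₀ : ℂ)) (𝓝 s₀) := by
    have hcont := X.continuous.continuousAt.comp hG.continuousAt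
    rwa [ContinuousAt, Function.comp_apply, hXG.self_of_nhds] at hcont
  have hGr : ∀ᶠ w in 𝓝 (s₀ : ℂ), G w ∈ ball a r :=
    hG.continuousAt.eventually_mem
      (hGΞ.self_of_nhds.symm ▸ isOpen_ball.mem_nhds hs₀r.self_of_nhds)
  have hshift : Tendsto (fun w : ℂ ↦ s₀ + w) (𝓝 0) (𝓝 s₀) :=
    (continuous_const_add (s₀ : ℂ)).tendsto' _ _ (add_zero _)
  have him : ∀ᶠ w in 𝓝 (s₀ : ℂ), σ (G w) = 0 → w.im = 0 := by
    filter_upwards [eventually_im_eq_zero_of_clm_apply_eq hG hXG, hGr,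
      hXG₀.eventually (hGΞ.and (hs₀X.and (hs₀A.and hs₀r)))] with w him hwr ⟨hwΞ, hwX, hwA, hwΞr⟩ hσw
    obtain ⟨t, ht⟩ := hX (G w - Ξ (X (G w))) (by rw [map_sub, hwX, sub_self])
    have hGw : G w = Ξ (X (G w)) + t • v := by rw [← ht, add_sub_cancel]
    have ht0 : t = 0 := hline _ hwΞr (fun j hj ↦ hzero j (Nat.lt_succ_iff.1 hj) _ hwA) t
      (hGw ▸ hwr) (hGw ▸ hσw)
    exact him (hwΞ.trans (by rw [ht0, zero_smul, add_zero] at hGw; exact hGw.symm))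
  refine ⟨fun w ↦ G (s₀ + w), ?_, ?_, ?_, ?_⟩
  · exact AnalyticAt.fun_comp (by simpa using hG) (analyticAt_const.add analyticAt_id)
  · simpa [deriv_comp_const_add] using deriv_ne_zero_of_clm_apply_eq hG.differentiableAt hXG
  · simpa using hshift.eventually him
  · have hreal : Tendsto (fun x : ℝ ↦ s₀ + x) (𝓝 0) (𝓝 s₀) :=
      (continuous_const_add s₀).tendsto' _ _ (add_zero _)
    filter_upwards [hreal.eventually (hGΞ.and hs₀A)] with x hx
    simpa [← hx.1] using hx.2

theorem exists_isStraighteningArc {σ : ℂ → ℝ} {O A : Set ℂ} (hO : IsPreconnected O)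
    (hσ : AnalyticOnNhd ℝ σ O) (hne : ∃ z ∈ O, σ z ≠ 0) (hAO : A ⊆ O) (hσA : ∀ z ∈ A, σ z = 0)
    (hA : IsPreconnected A) (hA2 : A.Nontrivial) : ∃ Γ : ℂ → ℂ, IsStraighteningArc σ A Γ := by
  obtain ⟨k, a, ha, v, hav, hzero⟩ :=
    exists_iteratedDirDeriv_succ_ne_zero_and_forall_le_eq_zero hσ hO hne hAO hA2.nonempty hσA
  have hσa := hσ a (hAO ha)
  rw [← fderiv_iteratedDirDeriv hσa] at hav
  obtain ⟨X, hX⟩ := exists_clm_ker_subset_line (v := v) (by rintro rfl; simp at hav)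
  have hinj : Function.Injective (X.prod (fderiv ℝ (iteratedDirDeriv σ v k) a)) := by
    rw [injective_iff_map_eq_zero]
    intro z hz
    obtain ⟨hXz, hdz⟩ := Prod.ext_iff.1 hz
    obtain ⟨t, rfl⟩ := hX z hXz
    have ht : t * fderiv ℝ (iteratedDirDeriv σ v k) a v = 0 := by
      rw [← smul_eq_mul, ← map_smul]
      exact hdz
    rw [(mul_eq_zero.1 ht).resolve_right hav, zero_smul]
  have hbij : Function.Bijective (X.prod (fderiv ℝ (iteratedDirDeriv σ v k) a)) :=
    ⟨hinj, (LinearMap.injective_iff_surjective_of_finrank_eq_finrank (by simp)).1 hinj⟩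
  obtain ⟨Ξ, hΞa, hΞ, hXΞ, hΞX⟩ := exists_analyticAt_section
    (analyticAt_iteratedDirDeriv hσa v k) (hzero k le_rfl a ha) hbij
  rw [fderiv_iteratedDirDeriv hσa] at hav
  refine exists_isStraighteningArc_of_section hσa hav hzero hX hΞa
    hΞ.eventually_analyticAt hXΞ (frequently_eventually_section_mem X.continuous hΞa
      (hΞ.eventually_analyticAt.mono fun s hs ↦ hs.continuousAt) hXΞ
      (hΞX.mono fun z hz hzA ↦ hz (hzero k le_rfl z hzA)) hA ha hA2)

/-! ### Boundary values of biholomorphic maps -/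

section ClusterSets

variable {α β : Type*} [TopologicalSpace β]

theorem isPreconnected_setOf_mapClusterPt [T2Space β] {l : Filter α} {f : α → β} {K : Set β}
    (hK : IsCompact K) (hfK : ∀ᶠ x in l, f x ∈ K)
    (hl : ∀ s ∈ l, ∃ t ∈ l, t ⊆ s ∧ IsPreconnected (f '' t)) :
    IsPreconnected {y | MapClusterPt y l f} := by
  set C := {y | MapClusterPt y l f}
  have hC : IsCompact C := hK.of_isClosed_subset isClosed_setOfPred_clusterPt
    fun y hy ↦ hK.isClosed.mem_of_mapClusterPt hy hfK
  refine isPreconnected_closed_iff.2 fun Z₁ Z₂ hZ₁ hZ₂ hcover ⟨y₁, hy₁, hy₁Z⟩ ⟨y₂, hy₂, hy₂Z⟩ ↦ ?_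
  by_contra hdisj
  have hdisj' : Disjoint (C ∩ Z₁) (C ∩ Z₂) :=
    Set.disjoint_left.2 fun y h₁ h₂ ↦ hdisj ⟨y, h₁.1, h₁.2, h₂.2⟩
  obtain ⟨W₁, W₂, hW₁, hW₂, hCW₁, hCW₂, hW⟩ :=
    SeparatedNhds.of_isCompact_isCompact (hC.inter_right hZ₁) (hC.inter_right hZ₂) hdisj'
  have hev : ∀ᶠ x in l, f x ∈ W₁ ∪ W₂ := by
    by_contra hne
    have hfreq : ∃ᶠ x in l, f x ∈ K \ (W₁ ∪ W₂) :=
      ((not_eventually.1 hne).and_eventually hfK).mono fun x hx ↦ ⟨hx.2, hx.1⟩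
    obtain ⟨y, hyK, hy⟩ := (hK.diff (hW₁.union hW₂)).exists_mapClusterPt_of_frequently hfreq
    exact hyK.2 ((hcover hy).imp (fun h ↦ hCW₁ ⟨hy, h⟩) fun h ↦ hCW₂ ⟨hy, h⟩)
  obtain ⟨t, ht, htW, hpre⟩ := hl _ hev
  have hmeet {y : β} {W : Set β} (hy : MapClusterPt y l f) (hW : IsOpen W) (hyW : y ∈ W) :
      (f '' t ∩ W).Nonempty := by
    obtain ⟨x, hxW, hxt⟩ := ((hy.frequently (hW.mem_nhds hyW)).and_eventually ht).exists
    exact ⟨f x, mem_image_of_mem f hxt, hxW⟩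
  obtain ⟨y, -, hy⟩ := hpre W₁ W₂ hW₁ hW₂ (image_subset_iff.2 htW)
    (hmeet hy₁ hW₁ (hCW₁ ⟨hy₁, hy₁Z⟩)) (hmeet hy₂ hW₂ (hCW₂ ⟨hy₂, hy₂Z⟩))
  exact Set.disjoint_left.1 hW hy.1 hy.2

theorem mapClusterPt_nhdsWithin_swap [TopologicalSpace α] {f : α → β} {F : β → α} {s : Set α}
    {t : Set β} {x : α} {y : β} (hf : MapsTo f s t) (hinv : LeftInvOn F f s)
    (h : MapClusterPt y (𝓝[s] x) f) : MapClusterPt x (𝓝[t] y) F := by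
  refine mapClusterPt_iff_frequently.2 fun V hV ↦ frequently_iff.2 fun {U} hU ↦ ?_
  have hVs : ∀ᶠ a in 𝓝[s] x, a ∈ V ∧ a ∈ s :=
    inter_mem (mem_nhdsWithin_of_mem_nhds hV) self_mem_nhdsWithin
  obtain ⟨a, haU, haV, has⟩ :=
    ((h.frequently (mem_nhdsWithin_iff_eventually.1 hU)).and_eventually hVs).exists
  exact ⟨f a, haU (hf has), by rwa [hinv has]⟩

end ClusterSets

theorem subset_of_isPreconnected_of_disjoint_frontier {α : Type*} [TopologicalSpace α] {s t : Set α}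
    (ht : IsPreconnected t) (hs : IsOpen s) (hst : Disjoint t (frontier s))
    (hne : (t ∩ s).Nonempty) : t ⊆ s := by
  refine ht.subset_left_of_subset_union hs isClosed_closure.isOpen_compl
    (disjoint_compl_right.mono_left subset_closure) (fun z hz ↦ ?_) hne
  by_contra hzs
  rw [mem_union, mem_compl_iff, not_or, not_not] at hzs
  exact Set.disjoint_left.1 hst hz (hs.frontier_eq ▸ ⟨hzs.2, hzs.1⟩)

section BoundaryArc

variable {Ω : Set ℂ} {F Γ : ℂ → ℂ} {R : ℝ} {ζ : ℂ}

theorem exists_interval_not_mapClusterPt_comp (hΩ : IsOpen Ω) (hF : DifferentiableOn ℂ F Ω)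
    (hlt : ∀ z ∈ Ω, ‖F z‖ < 1)
    (hlim : ∀ y ∈ frontier Ω, Tendsto (fun z ↦ ‖F z‖) (𝓝[Ω] y) (𝓝 1)) (hR : 0 < R)
    (hΓ : DifferentiableOn ℂ Γ (ball 0 R)) (hreal : ∀ x : ℝ, |x| < R → Γ x ∈ frontier Ω)
    (hoff : ∀ w ∈ upperHalfDisc R, Γ w ∉ frontier Ω) (hζ : ‖ζ‖ = 1) :
    ∃ x₀ δ : ℝ, 0 < δ ∧ |x₀| + δ ≤ R ∧ ∀ x : ℝ, |x - x₀| < δ →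
      ¬ MapClusterPt ζ (𝓝[Γ ⁻¹' Ω ∩ {w | 0 < w.im}] (x : ℂ)) (F ∘ Γ) := by
  have hsub : upperHalfDisc R ⊆ ball 0 R := inter_subset_left
  have hle {x : ℝ} (hx : |x| < R) :
      𝓝[Γ ⁻¹' Ω ∩ {w | 0 < w.im}] (x : ℂ) ≤ 𝓝[Γ ⁻¹' Ω ∩ upperHalfDisc R] (x : ℂ) := by
    rw [inter_comm, inter_comm (Γ ⁻¹' Ω), nhdsWithin_inter', nhdsWithin_inter',
      nhdsWithin_upperHalfDisc hx]
  by_cases hmeet : (Γ '' upperHalfDisc R ∩ Ω).Nonempty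
  · have hmaps : MapsTo Γ (upperHalfDisc R) Ω := mapsTo_iff_image_subset.2 <|
      subset_of_isPreconnected_of_disjoint_frontier
        ((convex_upperHalfDisc.isPreconnected).image _ (hΓ.continuousOn.mono hsub)) hΩ
        (disjoint_image_left.2 <| Set.disjoint_left.2 hoff) hmeet
    have hnorm (x : ℝ) (hx : |x| < R) :
        Tendsto (fun w ↦ ‖(F ∘ Γ) w‖) (𝓝[upperHalfDisc R] (x : ℂ)) (𝓝 1) := by
      have hcont : ContinuousAt Γ x :=
        hΓ.continuousOn.continuousAt (isOpen_ball.mem_nhds (by simpa using hx))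
      exact (hlim _ (hreal x hx)).comp (tendsto_nhdsWithin_iff.2
        ⟨hcont.mono_left nhdsWithin_le_nhds, eventually_nhdsWithin_of_forall hmaps⟩)
    obtain ⟨x₀, δ, hδ, hδR, h⟩ := exists_interval_not_mapClusterPt_of_upperHalfDisc hR
      (hF.comp (hΓ.mono hsub) hmaps) (fun w hw ↦ hlt _ (hmaps hw)) hnorm hζ
    refine ⟨x₀, δ, hδ, hδR, fun x hx hcl ↦ h x hx ?_⟩
    have hxR : |x| < R := by linarith [abs_sub_abs_le_abs_sub x x₀]
    exact hcl.mono ((hle hxR).trans (nhdsWithin_mono _ inter_subset_right))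
  · refine ⟨0, R, hR, by simp, fun x hx hcl ↦ ?_⟩
    have hempty : Γ ⁻¹' Ω ∩ upperHalfDisc R = ∅ :=
      eq_empty_of_forall_notMem fun w hw ↦ hmeet ⟨Γ w, mem_image_of_mem Γ hw.2, hw.1⟩
    have hbot := hcl.mono (hle (by simpa using hx))
    rw [hempty, nhdsWithin_empty, MapClusterPt, Filter.map_bot] at hbot
    exact hbot.neBot.ne (inf_bot_eq _)

theorem nhdsWithin_preimage_le_sup (hΩ : IsOpen Ω)
    (hreal : ∀ x : ℝ, |x| < R → Γ x ∈ frontier Ω) {x : ℝ} (hx : |x| < R) :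
    𝓝[Γ ⁻¹' Ω] (x : ℂ) ≤
      𝓝[Γ ⁻¹' Ω ∩ {w | 0 < w.im}] (x : ℂ) ⊔ 𝓝[Γ ⁻¹' Ω ∩ {w | w.im < 0}] (x : ℂ) := by
  rw [← nhdsWithin_union]
  refine nhdsWithin_le_iff.2 ?_
  have hball : (x : ℂ) ∈ ball 0 R := mem_ball_zero_iff.2 ((Complex.norm_real _).trans_lt hx)
  filter_upwards [self_mem_nhdsWithin,
    mem_nhdsWithin_of_mem_nhds (isOpen_ball.mem_nhds hball)] with w hw hwR
  rcases lt_trichotomy w.im 0 with him | him | him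
  · exact .inr ⟨hw, him⟩
  · have hwre : (w.re : ℂ) = w := Complex.ext rfl him.symm
    have hfr := hreal w.re (by rwa [← hwre, mem_ball_zero_iff, Complex.norm_real] at hwR)
    rw [hwre, hΩ.frontier_eq] at hfr
    exact absurd hw hfr.2
  · exact .inl ⟨hw, him⟩

-- The two sides of the arc are treated one after the other: the lower side becomes the upper side
-- of the arc `w ↦ Γ (x₀ - w)`, on the interval found for the upper side.
theorem exists_not_mapClusterPt_comp (hΩ : IsOpen Ω) (hF : DifferentiableOn ℂ F Ω)
    (hlt : ∀ z ∈ Ω, ‖F z‖ < 1)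
    (hlim : ∀ y ∈ frontier Ω, Tendsto (fun z ↦ ‖F z‖) (𝓝[Ω] y) (𝓝 1)) (hR : 0 < R)
    (hΓ : DifferentiableOn ℂ Γ (ball 0 R)) (hreal : ∀ x : ℝ, |x| < R → Γ x ∈ frontier Ω)
    (hoff : ∀ w ∈ ball 0 R, Γ w ∈ frontier Ω → w.im = 0) (hζ : ‖ζ‖ = 1) :
    ∃ x : ℝ, |x| < R ∧ ¬ MapClusterPt ζ (𝓝[Γ ⁻¹' Ω] (x : ℂ)) (F ∘ Γ) := by
  obtain ⟨x₀, δ, hδ, hδR, hupper⟩ := exists_interval_not_mapClusterPt_comp hΩ hF hlt hlim hR hΓ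
    hreal (fun w hw hfr ↦ hw.2.ne' (hoff w hw.1 hfr)) hζ
  have hmaps : MapsTo (fun w : ℂ ↦ x₀ - w) (ball 0 δ) (ball 0 R) := by
    intro w hw
    have := norm_sub_le (x₀ : ℂ) w
    rw [mem_ball_zero_iff] at hw ⊢
    rw [Complex.norm_real, Real.norm_eq_abs] at this
    linarith
  have hmapsReal {x : ℝ} (hx : |x| < δ) : |x₀ - x| < R := by
    have := abs_sub x₀ x
    linarith
  obtain ⟨x₁, δ₁, hδ₁, hδ₁δ, hlower⟩ := exists_interval_not_mapClusterPt_comp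
    (Γ := fun w ↦ Γ (x₀ - w)) hΩ hF hlt hlim hδ (hΓ.comp (by fun_prop) hmaps)
    (fun x hx ↦ by simpa using hreal (x₀ - x) (hmapsReal hx))
    (fun w hw hfr ↦ hw.2.ne' (by simpa using hoff _ (hmaps hw.1) hfr)) hζ
  have hx₁ : |x₁| < δ := by linarith
  have hxR := hmapsReal hx₁
  refine ⟨x₀ - x₁, hxR, fun hcl ↦ ?_⟩
  have hsup := hcl.clusterPt.mono (map_mono (nhdsWithin_preimage_le_sup hΩ hreal hxR))
  rw [Filter.map_sup, clusterPt_sup] at hsup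
  rcases hsup with h | h
  · exact hupper (x₀ - x₁) (by simpa using hx₁) h
  · have hφ : Tendsto (fun w : ℂ ↦ x₀ - w) (𝓝[Γ ⁻¹' Ω ∩ {w | w.im < 0}] ((x₀ - x₁ : ℝ) : ℂ))
        (𝓝[(fun w ↦ Γ (x₀ - w)) ⁻¹' Ω ∩ {w | 0 < w.im}] (x₁ : ℂ)) :=
      ((continuous_const.sub continuous_id).tendsto' _ _ (by simp)).inf <|
        tendsto_principal_principal.2 fun w hw ↦
          ⟨by simpa using hw.1, by simpa using hw.2⟩
    refine hlower x₁ (by simpa using hδ₁) (.of_comp hφ ?_)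
    simpa [Function.comp_def, MapClusterPt] using h

end BoundaryArc

section Extension

variable {Ω : Set ℂ} {F f : ℂ → ℂ}

theorem tendsto_norm_nhdsWithin_frontier (hΩ : IsOpen Ω) (hF : MapsTo F Ω (ball 0 1))
    (hf : ContinuousOn f (ball 0 1)) (hfΩ : MapsTo f (ball 0 1) Ω) (hinv : LeftInvOn f F Ω) {y : ℂ}
    (hy : y ∈ frontier Ω) : Tendsto (fun z ↦ ‖F z‖) (𝓝[Ω] y) (𝓝 1) := by
  refine tendsto_order.2 ⟨fun c hc ↦ ?_, fun c hc ↦ ?_⟩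
  · have hcomp : IsCompact (f '' closedBall 0 c) := (isCompact_closedBall 0 c).image_of_continuousOn
      (hf.mono (closedBall_subset_ball hc))
    have hyc : y ∉ f '' closedBall 0 c := by
      rintro ⟨w, hw, rfl⟩
      exact (hΩ.frontier_eq ▸ hy).2 (hfΩ (closedBall_subset_ball hc hw))
    filter_upwards [mem_nhdsWithin_of_mem_nhds (hcomp.isClosed.isOpen_compl.mem_nhds hyc),
      self_mem_nhdsWithin] with z hzc hzΩ
    contrapose! hzc
    exact not_not.2 ⟨F z, by simpa using hzc, hinv hzΩ⟩
  · filter_upwards [self_mem_nhdsWithin] with z hz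
    exact (mem_ball_zero_iff.1 (hF hz)).trans hc

theorem mem_frontier_of_mapClusterPt (hΩ : IsOpen Ω) (hF : ContinuousOn F Ω)
    (hFΩ : MapsTo F Ω (ball 0 1)) (hfΩ : MapsTo f (ball 0 1) Ω)
    (hinv : LeftInvOn F f (ball 0 1)) {ζ y : ℂ} (hζ : ‖ζ‖ = 1)
    (hy : MapClusterPt y (𝓝[ball 0 1] ζ) f) : y ∈ frontier Ω := by
  rw [hΩ.frontier_eq]
  refine ⟨isClosed_closure.mem_of_mapClusterPt hy
    (eventually_nhdsWithin_of_forall fun z hz ↦ subset_closure (hfΩ hz)), fun hyΩ ↦ ?_⟩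
  have hcl : ClusterPt ζ (𝓝 (F y)) :=
    (mapClusterPt_nhdsWithin_swap hfΩ hinv hy).clusterPt.mono (hF y hyΩ)
  have hlt := mem_ball_zero_iff.1 (hFΩ hyΩ)
  rw [← eq_of_nhds_neBot hcl, hζ] at hlt
  exact lt_irrefl 1 hlt

theorem subsingleton_setOf_mapClusterPt {σ : ℂ → ℝ} {O : Set ℂ} (hΩ : IsOpen Ω)
    (hΩb : IsBounded Ω) (hO : IsPreconnected O)
    (hσ : AnalyticOnNhd ℝ σ O) (hne : ∃ z ∈ O, σ z ≠ 0) (hΩO : frontier Ω ⊆ O)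
    (hΩσ : ∀ z ∈ frontier Ω, σ z = 0) (hF : DifferentiableOn ℂ F Ω)
    (hFΩ : MapsTo F Ω (ball 0 1)) (hf : ContinuousOn f (ball 0 1))
    (hfΩ : MapsTo f (ball 0 1) Ω) (hinv : InvOn f F Ω (ball 0 1)) {ζ : ℂ} (hζ : ‖ζ‖ = 1) :
    {y | MapClusterPt y (𝓝[ball 0 1] ζ) f}.Subsingleton := by
  set C := {y | MapClusterPt y (𝓝[ball 0 1] ζ) f}
  have hCfr : C ⊆ frontier Ω := fun y hy ↦
    mem_frontier_of_mapClusterPt hΩ hF.continuousOn hFΩ hfΩ hinv.2 hζ hy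
  have hC : IsPreconnected C := by
    refine isPreconnected_setOf_mapClusterPt hΩb.isCompact_closure
      (eventually_nhdsWithin_of_forall fun z hz ↦ subset_closure (hfΩ hz)) fun s hs ↦ ?_
    obtain ⟨r, hr, hrs⟩ := mem_nhdsWithin_iff.1 hs
    refine ⟨_, inter_mem_nhdsWithin _ (ball_mem_nhds ζ hr), inter_comm (ball ζ r) _ ▸ hrs, ?_⟩
    exact ((convex_ball 0 1).inter (convex_ball ζ r)).isPreconnected.image _
      (hf.mono inter_subset_left)
  by_contra hC2
  obtain ⟨Γ, hΓ⟩ := exists_isStraighteningArc hO hσ hne (hCfr.trans hΩO)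
    (fun z hz ↦ hΩσ z (hCfr hz)) hC (not_subsingleton_iff.1 hC2)
  obtain ⟨R, hR, hΓan, hΓd, hΓσ, hΓC⟩ := hΓ.exists_ball
  obtain ⟨x, hx, hnot⟩ := exists_not_mapClusterPt_comp hΩ hF
    (fun z hz ↦ mem_ball_zero_iff.1 (hFΩ hz))
    (fun y hy ↦ tendsto_norm_nhdsWithin_frontier hΩ hFΩ hf hfΩ hinv.1 hy) hR
    (fun w hw ↦ (hΓan w hw).differentiableAt.differentiableWithinAt)
    (fun x hx ↦ hCfr (hΓC x hx)) (fun w hw hfr ↦ hΓσ w hw (hΩσ _ hfr)) hζ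
  refine hnot ?_
  have hxball : (x : ℂ) ∈ ball (0 : ℂ) R := by simpa using hx
  have hmap : map Γ (𝓝[Γ ⁻¹' Ω] (x : ℂ)) = 𝓝[Ω] (Γ x) := by
    have hstrict : HasStrictDerivAt Γ (deriv Γ x) x :=
      (hΓan x hxball).contDiffAt.hasStrictDerivAt (n := 1) one_ne_zero
    rw [nhdsWithin, map_inf_principal_preimage, hstrict.map_nhds_eq (hΓd x hxball), nhdsWithin]
  rw [mapClusterPt_comp, hmap]
  exact mapClusterPt_nhdsWithin_swap hfΩ hinv.2 (hΓC x hx)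

theorem exists_continuousOn_closedBall_extension {σ : ℂ → ℝ} {O : Set ℂ} (hΩ : IsOpen Ω)
    (hΩb : IsBounded Ω) (hO : IsPreconnected O)
    (hσ : AnalyticOnNhd ℝ σ O) (hne : ∃ z ∈ O, σ z ≠ 0) (hΩO : frontier Ω ⊆ O)
    (hΩσ : ∀ z ∈ frontier Ω, σ z = 0) (hF : DifferentiableOn ℂ F Ω)
    (hFΩ : MapsTo F Ω (ball 0 1)) (hf : ContinuousOn f (ball 0 1))
    (hfΩ : MapsTo f (ball 0 1) Ω) (hinv : InvOn f F Ω (ball 0 1)) :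
    ∃ g : ℂ → ℂ, ContinuousOn g (closedBall 0 1) ∧ EqOn g f (ball 0 1) ∧
      MapsTo g (sphere 0 1) (frontier Ω) := by
  have hclosure : closure (ball (0 : ℂ) 1) = closedBall 0 1 := closure_ball 0 one_ne_zero
  have hlim : ∀ ζ ∈ sphere (0 : ℂ) 1, ∃ y ∈ frontier Ω, Tendsto f (𝓝[ball 0 1] ζ) (𝓝 y) := by
    intro ζ hζ
    have hζ1 : ‖ζ‖ = 1 := mem_sphere_zero_iff_norm.1 hζ
    have : (𝓝[ball (0 : ℂ) 1] ζ).NeBot :=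
      mem_closure_iff_nhdsWithin_neBot.1 (hclosure ▸ sphere_subset_closedBall hζ)
    have hev : ∀ᶠ z in 𝓝[ball (0 : ℂ) 1] ζ, f z ∈ closure Ω :=
      eventually_nhdsWithin_of_forall fun z hz ↦ subset_closure (hfΩ hz)
    obtain ⟨y, -, hy⟩ := hΩb.isCompact_closure.exists_mapClusterPt_of_frequently hev.frequently
    refine ⟨y, mem_frontier_of_mapClusterPt hΩ hF.continuousOn hFΩ hfΩ hinv.2 hζ1 hy, ?_⟩
    exact hΩb.isCompact_closure.tendsto_nhds_of_unique_mapClusterPt hev fun y' _ hy' ↦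
      subsingleton_setOf_mapClusterPt hΩ hΩb hO hσ hne hΩO hΩσ hF hFΩ hf hfΩ hinv hζ1 hy' hy
  refine ⟨extendFrom (ball 0 1) f, continuousOn_extendFrom hclosure.ge fun ζ hζ ↦ ?_,
    fun w hw ↦ extendFrom_extends hf w hw, fun ζ hζ ↦ ?_⟩
  · rcases (mem_closedBall_zero_iff.1 hζ).eq_or_lt with h | h
    · exact (hlim ζ (mem_sphere_zero_iff_norm.2 h)).imp fun y hy ↦ hy.2
    · exact ⟨f ζ, hf ζ (mem_ball_zero_iff.2 h)⟩
  · obtain ⟨y, hy, htendsto⟩ := hlim ζ hζ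
    rwa [extendFrom_eq (hclosure ▸ sphere_subset_closedBall hζ) htendsto]

end Extension

/-! ### Planar domains bounded by a zero set -/

section ConnectedComponents

variable {α : Type*} [TopologicalSpace α] [LocallyConnectedSpace α] {s : Set α} {x y : α}

theorem mem_connectedComponentIn_of_mem_closure (hs : IsOpen s) (hys : y ∈ s)
    (hy : y ∈ closure (connectedComponentIn s x)) : y ∈ connectedComponentIn s x := by
  obtain ⟨z, hzy, hzx⟩ :=
    mem_closure_iff.1 hy _ hs.connectedComponentIn (mem_connectedComponentIn hys)
  rw [connectedComponentIn_eq hzx, ← connectedComponentIn_eq hzy]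
  exact mem_connectedComponentIn hys

theorem frontier_connectedComponentIn_subset_compl (hs : IsOpen s) :
    frontier (connectedComponentIn s x) ⊆ sᶜ := fun y hy hys ↦ by
  rw [hs.connectedComponentIn.frontier_eq] at hy
  exact hy.2 (mem_connectedComponentIn_of_mem_closure hs hys hy.1)

theorem frontier_connectedComponentIn_compl_closure_subset (hs : IsOpen s) :
    frontier (connectedComponentIn (closure s)ᶜ x) ⊆ frontier s := by
  intro y hy
  have hys : y ∈ closure s :=
    not_not.1 (frontier_connectedComponentIn_subset_compl isClosed_closure.isOpen_compl hy)
  have hdisj : Disjoint (connectedComponentIn (closure s)ᶜ x) s :=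
    (disjoint_compl_left.mono_right subset_closure).mono_left (connectedComponentIn_subset _ _)
  rw [hs.frontier_eq]
  exact ⟨hys, Set.disjoint_left.1 (hdisj.closure_left hs) (frontier_subset_closure hy)⟩

end ConnectedComponents

theorem disjoint_connectedComponentIn_of_ne {α : Type*} [TopologicalSpace α] {s : Set α} {x y : α}
    (h : connectedComponentIn s x ≠ connectedComponentIn s y) :
    Disjoint (connectedComponentIn s x) (connectedComponentIn s y) :=
  Set.disjoint_left.2 fun _ hx hy ↦
    h ((connectedComponentIn_eq hx).trans (connectedComponentIn_eq hy).symm)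

theorem isPreconnected_setOf_le_norm {E : Type*} [NormedAddCommGroup E] [NormedSpace ℝ E]
    (h : 1 < Module.rank ℝ E) {r : ℝ} (hr : 0 < r) : IsPreconnected {x : E | r ≤ ‖x‖} := by
  have hpolar : {x : E | r ≤ ‖x‖} = (fun q : ℝ × E ↦ q.1 • q.2) '' Ici r ×ˢ sphere 0 1 := by
    ext x
    refine ⟨fun hx ↦ ?_, ?_⟩
    · have hx0 : ‖x‖ ≠ 0 := (hr.trans_le hx).ne'
      exact ⟨(‖x‖, ‖x‖⁻¹ • x), ⟨hx, by simp [norm_smul, hx0]⟩, smul_inv_smul₀ hx0 x⟩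
    · rintro ⟨⟨t, u⟩, ⟨ht, hu⟩, rfl⟩
      rw [mem_ofPred_eq, norm_smul, mem_sphere_zero_iff_norm.1 hu, mul_one]
      exact (mem_Ici.1 ht).trans (le_abs_self t)
  rw [hpolar]
  exact (isPreconnected_Ici.prod (isPreconnected_sphere h 0 1)).image _ (by fun_prop)

-- A compact subset of the component is filled in by the complement of the component of its
-- complement that contains `W`; all other components of `(closure W)ᶜ` are adjacent to `W`, and
-- hence contained in that component.
theorem hasConnectedComplExhaustion_connectedComponentIn_compl_closure {W : Set ℂ}
    (hW : IsPreconnected W) (hne : W.Nonempty) (hb : IsBounded (closure W)ᶜ) (x : ℂ) :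
    HasConnectedComplExhaustion (connectedComponentIn (closure W)ᶜ x) := by
  intro K hK hKx
  have hWo : IsOpen (closure W)ᶜ := isClosed_closure.isOpen_compl
  obtain ⟨w, hw⟩ := hne
  set Y := connectedComponentIn Kᶜ w
  have hWY : closure W ⊆ Y := hW.closure.subset_connectedComponentIn (subset_closure hw)
    fun z hz hzK ↦ connectedComponentIn_subset _ _ (hKx hzK) hz
  have hYo : IsOpen Y := hK.isClosed.isOpen_compl.connectedComponentIn
  refine ⟨Yᶜ, isCompact_of_isClosed_isBounded hYo.isClosed_compl
    (hb.subset (compl_subset_compl.2 hWY)),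
    subset_compl_comm.1 (connectedComponentIn_subset _ _), fun z hzY ↦ ?_,
    (compl_compl Y).symm ▸ isPreconnected_connectedComponentIn⟩
  by_contra hzx
  have hzW : z ∈ (closure W)ᶜ := fun h ↦ hzY (hWY h)
  set C := connectedComponentIn (closure W)ᶜ z
  have hzC : z ∈ C := mem_connectedComponentIn hzW
  have hCx := disjoint_connectedComponentIn_of_ne fun h ↦ hzx (h ▸ mem_connectedComponentIn hzW)
  obtain ⟨y, hy⟩ : (frontier C).Nonempty := nonempty_frontier_iff.2 ⟨⟨z, hzC⟩, fun huniv ↦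
    connectedComponentIn_subset _ z (huniv.symm ▸ mem_univ w : w ∈ C) (subset_closure hw)⟩
  have hyY : y ∈ Y := hWY (not_not.1 (frontier_connectedComponentIn_subset_compl hWo hy))
  have hCY : closure C ⊆ connectedComponentIn Kᶜ y :=
    isPreconnected_connectedComponentIn.closure.subset_connectedComponentIn
      (frontier_subset_closure hy) fun u hu huK ↦
        Set.disjoint_left.1 (hCx.closure_left hWo.connectedComponentIn) hu (hKx huK)
  exact hzY ((connectedComponentIn_eq hyY).ge (hCY (subset_closure hzC)))

theorem exists_isConnected_frontier_subset {A : Set ℂ} {r : ℝ} (hA : IsClosed A)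
    (hA1 : A ⊆ ball 0 1) (hr : 0 ≤ r) (hr1 : r < 1) (hrA : Disjoint (sphere 0 r) A)
    (hrW : Disjoint (sphere 0 r) (connectedComponentIn Aᶜ 1)) :
    ∃ Ω : Set ℂ, IsOpen Ω ∧ IsConnected Ω ∧ HasConnectedComplExhaustion Ω ∧
      closedBall 0 r ⊆ Ω ∧ Ω ⊆ ball 0 1 ∧ frontier Ω ⊆ A := by
  have hAo : IsOpen Aᶜ := hA.isOpen_compl
  set W := connectedComponentIn Aᶜ 1
  have hext : {z : ℂ | 1 ≤ ‖z‖} ⊆ W :=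
    (isPreconnected_setOf_le_norm (by simp) one_pos).subset_connectedComponentIn (by simp)
      fun z hz hzA ↦ (mem_ball_zero_iff.1 (hA1 hzA)).not_ge hz
  have h1W : (1 : ℂ) ∈ W := hext (by simp)
  have hWr : W ⊆ (closedBall 0 r)ᶜ :=
    subset_of_isPreconnected_of_disjoint_frontier isPreconnected_connectedComponentIn
      isClosed_closedBall.isOpen_compl
      (by rw [frontier_compl]; exact (hrW.mono_left frontier_closedBall_subset_sphere).symm)
      ⟨1, h1W, by simpa using hr1⟩
  have hrW' : closedBall 0 r ⊆ (closure W)ᶜ := by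
    intro z hz hzW
    rcases (mem_closedBall_zero_iff.1 hz).lt_or_eq with hzr | hzr
    · have hdisj : Disjoint W (ball 0 r) := Set.disjoint_left.2 fun u huW hur ↦
        hWr huW (ball_subset_closedBall hur)
      exact Set.disjoint_left.1 (hdisj.closure_left isOpen_ball) hzW (mem_ball_zero_iff.2 hzr)
    · have hzs : z ∈ sphere (0 : ℂ) r := mem_sphere_zero_iff_norm.2 hzr
      exact Set.disjoint_left.1 hrW hzs <|
        mem_connectedComponentIn_of_mem_closure hAo (Set.disjoint_left.1 hrA hzs) hzW
  have hW1 : (closure W)ᶜ ⊆ ball 0 1 := fun z hz ↦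
    mem_ball_zero_iff.2 (not_le.1 fun h ↦ hz (subset_closure (hext h)))
  refine ⟨connectedComponentIn (closure W)ᶜ 0, isClosed_closure.isOpen_compl.connectedComponentIn,
    isConnected_connectedComponentIn_iff.2 (hrW' (mem_closedBall_self hr)),
    hasConnectedComplExhaustion_connectedComponentIn_compl_closure
      isPreconnected_connectedComponentIn ⟨1, h1W⟩ (isBounded_ball.subset hW1) 0,
    isPreconnected_closedBall.subset_connectedComponentIn (mem_closedBall_self hr) hrW',
    (connectedComponentIn_subset _ _).trans hW1, ?_⟩
  exact (frontier_connectedComponentIn_compl_closure_subset hAo.connectedComponentIn).trans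
    ((frontier_connectedComponentIn_subset_compl hAo).trans (compl_compl A).le)

theorem connectedComponentIn_compl_subset_union {A G : Set ℂ} (hG : IsOpen G)
    (hGA : frontier G ∩ ball 0 1 ⊆ A) (h1G : sphere 0 1 ⊆ G) (h1A : 1 ∉ A) :
    connectedComponentIn Aᶜ 1 ⊆ G ∪ {z | 1 < ‖z‖} := by
  have hext : IsOpen {z : ℂ | 1 < ‖z‖} := isOpen_lt continuous_const continuous_norm
  refine subset_of_isPreconnected_of_disjoint_frontier isPreconnected_connectedComponentIn
    (hG.union hext) (Set.disjoint_left.2 fun z hzW hz ↦ connectedComponentIn_subset _ _ hzW ?_)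
    ⟨1, mem_connectedComponentIn h1A, .inl (h1G (by simp))⟩
  rw [(hG.union hext).frontier_eq, closure_union] at hz
  obtain ⟨hzG, hz1⟩ := not_or.1 hz.2
  have hzb : ‖z‖ < 1 :=
    (not_lt.1 hz1).lt_of_ne fun h ↦ hzG (h1G (mem_sphere_zero_iff_norm.2 h))
  have hzc : z ∈ closure G := hz.1.resolve_right fun h ↦
    (closure_lt_subset_le continuous_const continuous_norm h).not_gt hzb
  exact hGA ⟨hG.frontier_eq ▸ ⟨hzc, hzG⟩, mem_ball_zero_iff.2 hzb⟩

theorem exists_disc_sphere_eq_zero {σ : ℂ → ℝ} {O G : Set ℂ} {r : ℝ} (hO : IsPreconnected O)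
    (h1O : closedBall 0 1 ⊆ O) (hσ : AnalyticOnNhd ℝ σ O) (hG : IsOpen G)
    (hGσ : ∀ z ∈ frontier G, z ∈ ball 0 1 → σ z = 0) (h1G : sphere 0 1 ⊆ G)
    (h1σ : ∀ z ∈ sphere 0 1, σ z ≠ 0) (hr : 0 ≤ r) (hr1 : r < 1)
    (hrG : Disjoint (sphere 0 r) G) (hrσ : ∀ z ∈ sphere 0 r, σ z ≠ 0) :
    ∃ g : ℂ → ℂ, ContinuousOn g (closedBall 0 1) ∧ DifferentiableOn ℂ g (ball 0 1) ∧
      MapsTo g (closedBall 0 1) (ball 0 1) ∧ (∀ w ∈ sphere 0 1, σ (g w) = 0) ∧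
      closedBall 0 r ⊆ g '' ball 0 1 := by
  set A : Set ℂ := closedBall 0 1 ∩ σ ⁻¹' {0}
  have hA : IsClosed A :=
    (hσ.continuousOn.mono h1O).preimage_isClosed_of_isClosed isClosed_closedBall isClosed_singleton
  have hA1 : A ⊆ ball 0 1 := fun z hz ↦ (mem_closedBall.1 hz.1).lt_of_ne fun h ↦ h1σ z h hz.2
  have hrA : Disjoint (sphere 0 r) A := Set.disjoint_left.2 fun z hz hzA ↦ hrσ z hz hzA.2
  have hWG : connectedComponentIn Aᶜ 1 ⊆ G ∪ {z | 1 < ‖z‖} :=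
    connectedComponentIn_compl_subset_union hG
      (fun z hz ↦ ⟨ball_subset_closedBall hz.2, hGσ z hz.1 hz.2⟩) h1G fun h ↦ h1σ 1 (by simp) h.2
  have hrW : Disjoint (sphere 0 r) (connectedComponentIn Aᶜ 1) := by
    refine Set.disjoint_left.2 fun z hz hzW ↦ (hWG hzW).elim (Set.disjoint_left.1 hrG hz) fun h ↦ ?_
    exact (hr1.trans h).ne' (mem_sphere_zero_iff_norm.1 hz)
  obtain ⟨Ω, hΩo, hΩc, hΩe, hrΩ, hΩ1, hΩA⟩ :=
    exists_isConnected_frontier_subset hA hA1 hr hr1 hrA hrW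
  have hΩb : IsBounded Ω := isBounded_ball.subset hΩ1
  obtain ⟨F, hF, hinj, himage⟩ := exists_injOn_image_eq_ball hΩo hΩc hΩb hΩe
  obtain ⟨f, hf, hinv, hfΩ⟩ := exists_inverse_of_image_eq_ball hΩo hF hinj himage
  have hFΩ : MapsTo F Ω (ball 0 1) := mapsTo_iff_image_subset.2 himage.le
  obtain ⟨g, hg, hgf, hgΩ⟩ := exists_continuousOn_closedBall_extension hΩo hΩb hO hσ
    ⟨1, h1O (by simp), h1σ 1 (by simp)⟩ (fun z hz ↦ h1O (hΩA hz).1) (fun z hz ↦ (hΩA hz).2) hF hFΩ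
    hf.continuousOn hfΩ hinv
  refine ⟨g, hg, hf.congr hgf, fun w hw ↦ ?_, fun w hw ↦ (hΩA (hgΩ hw)).2, fun z hz ↦
    ⟨F z, hFΩ (hrΩ hz), (hgf (hFΩ (hrΩ hz))).trans (hinv.1 (hrΩ hz))⟩⟩
  rcases (mem_closedBall_zero_iff.1 hw).lt_or_eq with h | h
  · rw [hgf (mem_ball_zero_iff.2 h)]
    exact hΩ1 (hfΩ (mem_ball_zero_iff.2 h))
  · exact hA1 (hΩA (hgΩ (mem_sphere_zero_iff_norm.2 h)))

/-! ### Discs spanned by two curves -/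

theorem exists_forall_ball_subset_of_mapsTo {X Y : Type*} [TopologicalSpace X]
    [PseudoMetricSpace Y] {f : X → Y} {K : Set X} {V : Set Y} (hK : IsCompact K)
    (hf : ContinuousOn f K) (hV : IsOpen V) (h : MapsTo f K V) :
    ∃ κ > 0, ∀ x ∈ K, ball (f x) κ ⊆ V := by
  obtain ⟨κ, hκ, hsub⟩ :=
    (hK.image_of_continuousOn hf).exists_thickening_subset_open hV h.image_subset
  exact ⟨κ, hκ, fun x hx ↦ (ball_subset_thickening (mem_image_of_mem f hx) κ).trans hsub⟩

theorem exists_ne_zero_mul_half_pow_mapsTo {X : Type*} [PseudoMetricSpace X] {φ : ℂ → X} {c : ℂ}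
    {κ : ℝ} (hφ : ContinuousAt φ 0) (hκ : 0 < κ) :
    ∃ N ≠ 0, MapsTo (fun z : ℂ ↦ φ (c * z ^ N)) (sphere 0 (1 / 2)) (ball (φ 0) κ) := by
  obtain ⟨δ, hδ, h⟩ := Metric.eventually_nhds_iff_ball.1 (hφ.eventually_mem (ball_mem_nhds _ hκ))
  have hlim : Tendsto (fun N : ℕ ↦ ‖c‖ * (1 / 2 : ℝ) ^ N) atTop (𝓝 0) := by
    simpa using (tendsto_pow_atTop_nhds_zero_of_lt_one (r := (1 / 2 : ℝ)) (by norm_num)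
      (by norm_num)).const_mul ‖c‖
  obtain ⟨N, hN, hN0⟩ := ((hlim.eventually_lt_const hδ).and (eventually_ne_atTop 0)).exists
  refine ⟨N, hN0, fun z hz ↦ h _ ?_⟩
  rwa [mem_ball_zero_iff, norm_mul, norm_pow, mem_sphere_zero_iff_norm.1 hz]

theorem exists_one_lt_and_lt_two_and_pow_lt_four (N : ℕ) :
    ∃ R : ℝ, 1 < R ∧ R < 2 ∧ R ^ N < 4 := by
  have hpow : ∀ᶠ R : ℝ in 𝓝 1, R ^ N < 4 :=
    ((continuous_pow N).tendsto 1).eventually_lt_const (by norm_num)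
  obtain ⟨R, ⟨hR2, hRN⟩, hR1⟩ := ((((gt_mem_nhds one_lt_two).and hpow).filter_mono
    nhdsWithin_le_nhds).and (eventually_mem_nhdsWithin (s := Ioi 1))).exists
  exact ⟨R, hR1, hR2, hRN⟩

theorem mapsTo_mul_pow_ball {c : ℂ} {R s : ℝ} {N : ℕ} (h : ‖c‖ * R ^ N < s) :
    MapsTo (fun z : ℂ ↦ c * z ^ N) (ball 0 R) (ball 0 s) := fun z hz ↦ by
  rw [mem_ball_zero_iff] at hz ⊢
  rw [norm_mul, norm_pow]
  exact h.trans_le' (by gcongr)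

theorem dist_add_sub_self {E : Type*} [SeminormedAddCommGroup E] (a b p : E) :
    dist (a + (b - p)) a = dist b p := by
  rw [dist_self_add_left, dist_eq_norm]

section TwoCurves

variable {E : Type*} [NormedAddCommGroup E] [NormedSpace ℂ E] [CompleteSpace E]

theorem eventually_mem_of_image_diff_subset {φ : ℂ → E} {V : Set E} {r : ℝ} (hr : 0 < r)
    (hφ : DifferentiableOn ℂ φ (ball 0 r))
    (hne : ∃ a ∈ ball (0 : ℂ) r, ∃ b ∈ ball (0 : ℂ) r, φ a ≠ φ b)
    (hV : φ '' ball 0 r \ {φ 0} ⊆ V) : ∀ᶠ z in 𝓝[≠] 0, φ z ∈ V := by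
  have hφ0 : ∀ᶠ z in 𝓝[≠] 0, φ z ≠ φ 0 := by
    by_contra hfreq
    have hconst : EqOn φ (fun _ ↦ φ 0) (ball 0 r) :=
      (hφ.analyticOnNhd isOpen_ball).eqOn_of_preconnected_of_frequently_eq analyticOnNhd_const
        (convex_ball (0 : ℂ) r).isPreconnected (mem_ball_self hr) hfreq
    obtain ⟨a, ha, b, hb, hab⟩ := hne
    exact hab ((hconst ha).trans (hconst hb).symm)
  have hball : ∀ᶠ z in 𝓝[≠] 0, z ∈ ball (0 : ℂ) r := nhdsWithin_le_nhds (ball_mem_nhds 0 hr)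
  filter_upwards [hφ0, hball] with z hz hzr
  exact hV ⟨mem_image_of_mem φ hzr, hz⟩

theorem exists_forall_sphere_ball_subset {φ : ℂ → E} {V : Set E} {d : ℝ}
    (hφ : AnalyticAt ℂ φ 0) (hV : IsOpen V) (hφV : ∀ᶠ z in 𝓝[≠] 0, φ z ∈ V) (hd : 0 < d) :
    ∃ r > 0, ∃ κ > 0, DifferentiableOn ℂ φ (ball 0 (4 * r)) ∧
      MapsTo φ (ball 0 (4 * r)) (ball (φ 0) d) ∧ ∀ z ∈ sphere 0 r, ball (φ z) κ ⊆ V := by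
  have hφd : ∀ᶠ z in 𝓝 0, φ z ∈ ball (φ 0) d :=
    hφ.continuousAt.eventually_mem (ball_mem_nhds _ hd)
  obtain ⟨δ, hδ, h⟩ := Metric.eventually_nhds_iff_ball.1
    (hφ.eventually_analyticAt.and (hφd.and (eventually_nhdsWithin_iff.1 hφV)))
  have hr : 4 * (δ / 4) = δ := by ring
  have hsub : sphere (0 : ℂ) (δ / 4) ⊆ ball 0 δ :=
    sphere_subset_closedBall.trans (closedBall_subset_ball (by linarith))
  have hdiff : DifferentiableOn ℂ φ (ball 0 δ) := fun z hz ↦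
    (h z hz).1.differentiableAt.differentiableWithinAt
  obtain ⟨κ, hκ, hκV⟩ := exists_forall_ball_subset_of_mapsTo (isCompact_sphere (0 : ℂ) (δ / 4))
    (hdiff.continuousOn.mono hsub) hV fun z hz ↦
      (h z (hsub hz)).2.2 (ne_of_mem_sphere hz (by positivity))
  exact ⟨δ / 4, by positivity, κ, hκ, hr.symm ▸ hdiff, fun z hz ↦ (h z (hr ▸ hz)).2.1, hκV⟩

variable {U V₁ V₂ : Set E} {p : E} {φ₁ φ₂ : ℂ → E}

/- In `φ₁ (r₁ z ^ N) + φ₂ (2 r₂ z) - p` the first curve dominates on `‖z‖ = 1` since `r₂` is chosen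
after `r₁`, the second one on `‖z‖ = 1 / 2` since `N` is chosen last. -/
theorem exists_disc_through_center (hU : U ∈ 𝓝 p) (hV₁ : IsOpen V₁) (hV₂ : IsOpen V₂)
    (hφ₁ : AnalyticAt ℂ φ₁ 0) (hφ₂ : AnalyticAt ℂ φ₂ 0) (h₁p : φ₁ 0 = p) (h₂p : φ₂ 0 = p)
    (hφ₁V : ∀ᶠ z in 𝓝[≠] 0, φ₁ z ∈ V₁) (hφ₂V : ∀ᶠ z in 𝓝[≠] 0, φ₂ z ∈ V₂) :
    ∃ (Ψ : ℂ → E) (R : ℝ), 1 < R ∧ DifferentiableOn ℂ Ψ (ball 0 R) ∧ MapsTo Ψ (ball 0 R) U ∧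
      Ψ 0 = p ∧ MapsTo Ψ (sphere 0 1) V₁ ∧ MapsTo Ψ (sphere 0 (1 / 2)) V₂ := by
  obtain ⟨d, hd, hdU⟩ := Metric.mem_nhds_iff.1 hU
  obtain ⟨r₁, hr₁, κ₁, hκ₁, hd₁, hm₁, hs₁⟩ :=
    exists_forall_sphere_ball_subset hφ₁ hV₁ hφ₁V (half_pos hd)
  obtain ⟨r₂, hr₂, κ₂, hκ₂, hd₂, hm₂, hs₂⟩ :=
    exists_forall_sphere_ball_subset hφ₂ hV₂ hφ₂V (lt_min (half_pos hd) hκ₁)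
  obtain ⟨N, hN, hm₁'⟩ := exists_ne_zero_mul_half_pow_mapsTo (c := r₁) hφ₁.continuousAt hκ₂
  simp only [h₁p, h₂p] at hm₁ hm₁' hm₂
  obtain ⟨R, hR1, hR2, hRN⟩ := exists_one_lt_and_lt_two_and_pow_lt_four N
  have hz₁ : MapsTo (fun z : ℂ ↦ r₁ * z ^ N) (ball 0 R) (ball 0 (4 * r₁)) :=
    mapsTo_mul_pow_ball (by rw [Complex.norm_of_nonneg hr₁.le, mul_comm]; gcongr)
  have hz₂ : MapsTo (fun z : ℂ ↦ 2 * r₂ * z) (ball 0 R) (ball 0 (4 * r₂)) := by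
    simpa using mapsTo_mul_pow_ball (c := 2 * r₂) (N := 1) (R := R) (s := 4 * r₂) (by
      simp only [norm_mul, Complex.norm_of_nonneg hr₂.le, Complex.norm_ofNat]; nlinarith)
  refine ⟨fun z ↦ φ₁ (r₁ * z ^ N) + (φ₂ (2 * r₂ * z) - p), R, hR1,
    (hd₁.comp (by fun_prop) hz₁).add ((hd₂.comp (by fun_prop) hz₂).sub_const p),
    fun z hz ↦ hdU ?_, by simp [hN, h₁p, h₂p], fun z hz ↦ hs₁ (r₁ * z ^ N) ?_ ?_,
    fun z hz ↦ hs₂ (2 * r₂ * z) ?_ ?_⟩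
  · calc dist (φ₁ (r₁ * z ^ N) + (φ₂ (2 * r₂ * z) - p)) p
        ≤ dist (φ₂ (2 * r₂ * z)) p + dist (φ₁ (r₁ * z ^ N)) p :=
          (dist_triangle _ _ _).trans_eq (by rw [dist_add_sub_self])
      _ < d / 2 + d / 2 := add_lt_add ((hm₂ (hz₂ hz)).trans_le (min_le_left _ _)) (hm₁ (hz₁ hz))
      _ = d := add_halves d
  · simp [abs_of_pos hr₁, mem_sphere_zero_iff_norm.1 hz]
  · rw [mem_ball, dist_add_sub_self]
    exact (hm₂ (hz₂ (sphere_subset_ball hR1 hz))).trans_le (min_le_right _ _)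
  · simp [abs_of_pos hr₂, mem_sphere_zero_iff_norm.1 hz, mul_right_comm]
  · beta_reduce
    rw [mem_ball, add_sub_left_comm, dist_add_sub_self]
    exact hm₁' hz

theorem exists_forall_disc_through (hU : IsOpen U) (hp : p ∈ U) (hV₁ : IsOpen V₁)
    (hV₂ : IsOpen V₂) (hφ₁ : AnalyticAt ℂ φ₁ 0) (hφ₂ : AnalyticAt ℂ φ₂ 0) (h₁p : φ₁ 0 = p)
    (h₂p : φ₂ 0 = p) (hφ₁V : ∀ᶠ z in 𝓝[≠] 0, φ₁ z ∈ V₁) (hφ₂V : ∀ᶠ z in 𝓝[≠] 0, φ₂ z ∈ V₂) :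
    ∃ ε > 0, ∀ q ∈ ball p ε, ∃ (Ψ : ℂ → E) (R : ℝ), 1 < R ∧ DifferentiableOn ℂ Ψ (ball 0 R) ∧
      MapsTo Ψ (ball 0 R) U ∧ Ψ 0 = q ∧ MapsTo Ψ (sphere 0 1) V₁ ∧
      MapsTo Ψ (sphere 0 (1 / 2)) V₂ := by
  obtain ⟨Ψ, R, hR, hΨ, hΨU, hΨ0, hΨ₁, hΨ₂⟩ :=
    exists_disc_through_center (hU.mem_nhds hp) hV₁ hV₂ hφ₁ hφ₂ h₁p h₂p hφ₁V hφ₂V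
  obtain ⟨S, hS1, hSR⟩ := exists_between hR
  have hcS : closedBall (0 : ℂ) S ⊆ ball 0 R := closedBall_subset_ball hSR
  have hc₁ : sphere (0 : ℂ) 1 ⊆ ball 0 R := sphere_subset_ball hR
  have hc₂ : sphere (0 : ℂ) (1 / 2) ⊆ ball 0 R := sphere_subset_ball (by linarith)
  obtain ⟨ε, hε, hεU⟩ := exists_forall_ball_subset_of_mapsTo (isCompact_closedBall 0 S)
    (hΨ.continuousOn.mono hcS) hU (hΨU.mono_left hcS)
  obtain ⟨ε₁, hε₁, hεV₁⟩ := exists_forall_ball_subset_of_mapsTo (isCompact_sphere 0 1)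
    (hΨ.continuousOn.mono hc₁) hV₁ hΨ₁
  obtain ⟨ε₂, hε₂, hεV₂⟩ := exists_forall_ball_subset_of_mapsTo (isCompact_sphere 0 (1 / 2))
    (hΨ.continuousOn.mono hc₂) hV₂ hΨ₂
  refine ⟨min ε (min ε₁ ε₂), by positivity, fun q hq ↦ ?_⟩
  simp only [mem_ball, lt_min_iff] at hq
  refine ⟨fun z ↦ Ψ z + (q - p), S, hS1,
    (hΨ.mono (ball_subset_closedBall.trans hcS)).add_const _,
    fun z hz ↦ hεU z (ball_subset_closedBall hz) ?_, by simp [hΨ0],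
    fun z hz ↦ hεV₁ z hz ?_, fun z hz ↦ hεV₂ z hz ?_⟩ <;> rw [mem_ball, dist_add_sub_self]
  exacts [hq.1, hq.2.1, hq.2.2]

end TwoCurves

theorem isOpen_diff_zeroSet {X : Type*} [TopologicalSpace X] {U H : Set X} {ρ : X → ℝ}
    (hU : IsOpen U) (hρ : ContinuousOn ρ U) (hH : H = {z | z ∈ U ∧ ρ z = 0}) :
    IsOpen (U \ H) := by
  convert hρ.isOpen_inter_preimage hU (isOpen_compl_singleton (x := (0 : ℝ))) using 1
  ext z
  simp +contextual [hH]

section ZeroSet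

variable {E : Type*} [NormedAddCommGroup E] [NormedSpace ℂ E] [CompleteSpace E]
  {U H : Set E} {ρ : E → ℝ}

theorem exists_disc_sphere_comp_eq_zero {Ψ : ℂ → E} {R r : ℝ} {x : E} (hU : IsOpen U)
    (hρ : AnalyticOnNhd ℝ ρ U) (hH : H = {z | z ∈ U ∧ ρ z = 0}) (hR : 1 < R)
    (hΨ : DifferentiableOn ℂ Ψ (ball 0 R)) (hΨU : MapsTo Ψ (ball 0 R) U)
    (hΨ1 : MapsTo Ψ (sphere 0 1) (connectedComponentIn (U \ H) x)) (hr : 0 ≤ r) (hr1 : r < 1)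
    (hΨr : MapsTo Ψ (sphere 0 r) ((U \ H) \ connectedComponentIn (U \ H) x)) :
    ∃ g : ℂ → ℂ, ContinuousOn g (closedBall 0 1) ∧ DifferentiableOn ℂ g (ball 0 1) ∧
      MapsTo g (closedBall 0 1) (ball 0 1) ∧ (∀ w ∈ sphere 0 1, ρ (Ψ (g w)) = 0) ∧
      closedBall 0 r ⊆ g '' ball 0 1 := by
  have hUH : IsOpen (U \ H) := isOpen_diff_zeroSet hU hρ.continuousOn hH
  have hne : ∀ z ∈ U \ H, ρ z ≠ 0 := fun z hz h ↦ hz.2 (hH ▸ ⟨hz.1, h⟩)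
  have hσ : AnalyticOnNhd ℝ (ρ ∘ Ψ) (ball 0 R) := fun z hz ↦
    (hρ _ (hΨU hz)).comp (hΨ.analyticOnNhd isOpen_ball z hz).restrictScalars
  have hG : IsOpen (ball 0 R ∩ Ψ ⁻¹' connectedComponentIn (U \ H) x) :=
    hΨ.continuousOn.isOpen_inter_preimage isOpen_ball hUH.connectedComponentIn
  refine exists_disc_sphere_eq_zero (convex_ball 0 R).isPreconnected (closedBall_subset_ball hR)
    hσ hG ?_
    (fun z hz ↦ ⟨sphere_subset_ball hR hz, hΨ1 hz⟩)
    (fun z hz ↦ hne _ (connectedComponentIn_subset _ _ (hΨ1 hz))) hr hr1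
    (disjoint_left.2 fun z hz hzG ↦ (hΨr hz).2 hzG.2) (fun z hz ↦ hne _ (hΨr hz).1)
  intro z hz hz1
  have hzR : z ∈ ball 0 R := ball_subset_ball hR.le hz1
  rw [hG.frontier_eq] at hz
  by_contra hσz
  have hΨz : Ψ z ∈ closure (connectedComponentIn (U \ H) x) :=
    ((hΨ.continuousOn z hzR).mono inter_subset_left).mem_closure hz.1 fun y hy ↦ hy.2
  have hΨzH : Ψ z ∉ H := fun h ↦ hσz (hH ▸ h : Ψ z ∈ {z | z ∈ U ∧ ρ z = 0}).2
  exact hz.2 ⟨hzR, mem_connectedComponentIn_of_mem_closure hUH ⟨hΨU hzR, hΨzH⟩ hΨz⟩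

theorem attached_disc_through_every_nearby_point_general (hU : IsOpen U)
    (hρ : AnalyticOnNhd ℝ ρ U) (hH : H = {z | z ∈ U ∧ ρ z = 0}) {p : E} (hp : p ∈ U)
    {φ₁ φ₂ : ℂ → E} (hφ₁ : AnalyticAt ℂ φ₁ 0) (hφ₂ : AnalyticAt ℂ φ₂ 0) (h₁p : φ₁ 0 = p)
    (h₂p : φ₂ 0 = p) {x₁ x₂ : E}
    (hx : connectedComponentIn (U \ H) x₁ ≠ connectedComponentIn (U \ H) x₂)
    (hφ₁V : ∀ᶠ z in 𝓝[≠] 0, φ₁ z ∈ connectedComponentIn (U \ H) x₁)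
    (hφ₂V : ∀ᶠ z in 𝓝[≠] 0, φ₂ z ∈ connectedComponentIn (U \ H) x₂) :
    ∃ ε > 0, ∀ q ∈ ball p ε, ∃ ψ : ℂ → E,
      (ContinuousOn ψ (closedBall 0 1) ∧ DifferentiableOn ℂ ψ (ball 0 1) ∧
        (∃ a ∈ closedBall (0 : ℂ) 1, ∃ b ∈ closedBall (0 : ℂ) 1, ψ a ≠ ψ b) ∧
        ψ '' sphere 0 1 ⊆ H) ∧
      ψ '' closedBall 0 1 ⊆ U ∧ q ∈ ψ '' closedBall 0 1 := by
  have hUH : IsOpen (U \ H) := isOpen_diff_zeroSet hU hρ.continuousOn hH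
  obtain ⟨ε, hε, hdisc⟩ := exists_forall_disc_through hU hp hUH.connectedComponentIn
    hUH.connectedComponentIn hφ₁ hφ₂ h₁p h₂p hφ₁V hφ₂V
  refine ⟨ε, hε, fun q hq ↦ ?_⟩
  obtain ⟨Ψ, R, hR, hΨ, hΨU, hΨ0, hΨ₁, hΨ₂⟩ := hdisc q hq
  have hΨ₂' : MapsTo Ψ (sphere 0 (1 / 2)) ((U \ H) \ connectedComponentIn (U \ H) x₁) :=
    hΨ₂.mono_right (subset_sdiff.2 ⟨connectedComponentIn_subset _ _,
      disjoint_connectedComponentIn_of_ne hx.symm⟩)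
  obtain ⟨g, hgc, hgd, hg1, hgs, hgr⟩ := exists_disc_sphere_comp_eq_zero hU hρ hH hR hΨ hΨU hΨ₁
    (by norm_num) (by norm_num) hΨ₂'
  have hgR : MapsTo g (closedBall 0 1) (ball 0 R) := hg1.mono_right (ball_subset_ball hR.le)
  have hgH : ∀ w ∈ sphere (0 : ℂ) 1, Ψ (g w) ∈ H := fun w hw ↦
    hH ▸ ⟨hΨU (hgR (sphere_subset_closedBall hw)), hgs w hw⟩
  obtain ⟨w₀, hw₀, hgw₀⟩ := hgr (mem_closedBall_self (by norm_num))
  have h2 : (1 / 2 : ℂ) ∈ sphere 0 (1 / 2) := by simp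
  obtain ⟨w₁, hw₁, hgw₁⟩ := hgr (sphere_subset_closedBall h2)
  refine ⟨Ψ ∘ g, ⟨hΨ.continuousOn.comp hgc hgR,
    hΨ.comp hgd (hgR.mono_left ball_subset_closedBall),
    ⟨w₁, ball_subset_closedBall hw₁, 1, by simp, fun h ↦ (hΨ₂' h2).1.2 ?_⟩, image_subset_iff.2 hgH⟩,
    (hΨU.comp hgR).image_subset, w₀, ball_subset_closedBall hw₀, by simp [hgw₀, hΨ0]⟩
  rw [← hgw₁]
  exact mem_of_eq_of_mem h (hgH 1 (by simp))

end ZeroSet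

theorem IsSupportCurve.exists_analyticAt {n : ℕ} {U H C V : Set (EuclideanSpace ℂ (Fin n))}
    {p : EuclideanSpace ℂ (Fin n)} (hC : IsSupportCurve U H p C) (hCV : C \ {p} ⊆ V) :
    ∃ φ : ℂ → EuclideanSpace ℂ (Fin n),
      AnalyticAt ℂ φ 0 ∧ φ 0 = p ∧ ∀ᶠ z in 𝓝[≠] 0, φ z ∈ V := by
  obtain ⟨φ, hφ, -, hne, rfl, rfl, -⟩ := hC
  exact ⟨φ, hφ.analyticAt (ball_mem_nhds 0 one_pos), rfl,
    eventually_mem_of_image_diff_subset one_pos hφ hne hCV⟩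

theorem attached_disc_through_every_nearby_point {n : ℕ} (hn : 2 ≤ n)
    (U H : Set (EuclideanSpace ℂ (Fin n)))
    (hH : IsRealAnalyticHypersurface U H)
    (p : EuclideanSpace ℂ (Fin n)) (hp : p ∈ H)
    (h2 : CurveSupportedFromTwoSides U H p) :
    ∃ ε > 0, ∀ q ∈ ball p ε,
      ∃ ψ : ℂ → EuclideanSpace ℂ (Fin n),
        IsAttachedDisc H ψ ∧ ψ '' closedBall 0 1 ⊆ U ∧ q ∈ ψ '' closedBall 0 1 := by
  obtain ⟨hU, -, ρ, hρ, hHρ, -⟩ := hH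
  obtain ⟨C₁, C₂, V₁, V₂, hC₁, hC₂, ⟨x₁, -, rfl⟩, ⟨x₂, -, rfl⟩, hV, hCV₁, hCV₂⟩ := h2
  obtain ⟨φ₁, hφ₁, h₁p, hφ₁V⟩ := hC₁.exists_analyticAt hCV₁
  obtain ⟨φ₂, hφ₂, h₂p, hφ₂V⟩ := hC₂.exists_analyticAt hCV₂
  exact attached_disc_through_every_nearby_point_general hU hρ hHρ (hHρ ▸ hp : p ∈ {z | _}).1
    hφ₁ hφ₂ h₁p h₂p hV hφ₁V hφ₂V
end
end

section
/- Let H be a real-analytic hypersurface in an open set U ⊆ ℂⁿ (n ≥ 2) that is curve-supported from two sides at a point p ∈ H. Then for every compact set K ⊆ H that is a neighborhood of p in H (i.e., H ∩ B_δ(p) ⊆ K for some δ > 0), the polynomial hull K̂ contains an open neighborhood of p in ℂⁿ. -/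
open Metric

noncomputable section

/-!
Let `φ` parametrize a support curve whose punctured disc lies in the component `V`, and take a small
circle around `0`; its image is a compact subset of `V`. For `z` near `p` the translated disc
`φ + (z - p)` passes through `z` and still maps the circle into `V`. If `z ∉ V`, the part of the
closed disc mapped outside `V` is a compact set whose frontier is mapped into `frontier V` near `p`,
hence into `K`, so the maximum modulus principle applied to polynomials along the disc puts `z` into
the hull of `K`. Two support curves in disjoint components cover all `z` near `p`.
-/

open Filter Set Topology

section Topology

variable {X Y : Type*} [TopologicalSpace X] [TopologicalSpace Y]

theorem disjoint_frontier_connectedComponentIn [LocallyConnectedSpace X] {F : Set X}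
    (hF : IsOpen F) (x : X) : Disjoint (frontier (connectedComponentIn F x)) F := by
  refine disjoint_left.2 fun y hy hyF => ?_
  have hy_self : y ∈ connectedComponentIn F y := mem_connectedComponentIn hyF
  obtain ⟨z, hzy, hzx⟩ :=
    mem_closure_iff.1 (frontier_subset_closure hy) _ hF.connectedComponentIn hy_self
  rw [connectedComponentIn_eq hzy, ← connectedComponentIn_eq hzx] at hy_self
  exact disjoint_left.1 (disjoint_frontier_iff_isOpen.2 hF.connectedComponentIn) hy hy_self

theorem mapsTo_frontier_inter_preimage_compl {A : Set X} {V : Set Y} {f : X → Y}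
    (hA : IsClosed A) (hf : ContinuousOn f A) (hV : IsOpen V) (hfV : MapsTo f (frontier A) V) :
    MapsTo f (frontier (A ∩ f ⁻¹' Vᶜ)) (frontier V) := by
  intro x hx
  have hclosed : IsClosed (A ∩ f ⁻¹' Vᶜ) := hf.preimage_isClosed_of_isClosed hA hV.isClosed_compl
  obtain ⟨hxA, hxV⟩ := hclosed.frontier_subset hx
  have hA_nhds : A ∈ 𝓝 x := by
    by_contra h
    exact hxV (hfV ⟨subset_closure hxA, mt mem_interior_iff_mem_nhds.1 h⟩)
  rw [hV.frontier_eq]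
  refine ⟨by_contra fun hxcl => hx.2 (mem_interior_iff_mem_nhds.2 ?_), hxV⟩
  filter_upwards [hA_nhds, (hf.continuousAt hA_nhds).preimage_mem_nhds
    (isClosed_closure.isOpen_compl.mem_nhds hxcl)] with y hyA hycl
  exact ⟨hyA, fun hyV => hycl (subset_closure hyV)⟩

theorem eventually_mapsTo_add_right [AddGroup Y] [IsTopologicalAddGroup Y] {A : Set X} {V : Set Y}
    {f : X → Y} (hA : IsCompact A) (hf : ContinuousOn f A) (hV : IsOpen V) (hfV : MapsTo f A V) :
    ∀ᶠ v in 𝓝 (0 : Y), MapsTo (fun x => f x + v) A V := by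
  obtain ⟨N, hN, hNV⟩ :=
    compact_open_separated_add_right (hA.image_of_continuousOn hf) hV hfV.image_subset
  filter_upwards [hN] with v hv x hx
  exact hNV (add_mem_add (mem_image_of_mem f hx) hv)

end Topology

section PolynomialHull

variable {n : ℕ} {K : Set (EuclideanSpace ℂ (Fin n))}

theorem differentiable_eval_mvPolynomial {𝕜 ι : Type*} [RCLike 𝕜] [Finite ι]
    (P : MvPolynomial ι 𝕜) :
    Differentiable 𝕜 fun z : EuclideanSpace 𝕜 ι => MvPolynomial.eval (fun i => z i) P := by
  have := Fintype.ofFinite ι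
  exact (differentiableOn_univ.1 (AnalyticOnNhd.eval_mvPolynomial P).differentiableOn).comp
    (EuclideanSpace.equiv ι 𝕜).differentiable

theorem subset_polyHull_of_isCompact (hK : IsCompact K) : K ⊆ polyHull K := by
  intro w hw P
  have hbdd := hK.bddAbove_image (differentiable_eval_mvPolynomial P).continuous.norm.continuousOn
  rw [image_eq_range] at hbdd
  exact le_ciSup hbdd ⟨w, hw⟩

variable {E : Type*} [NormedAddCommGroup E] [NormedSpace ℂ E] [Nontrivial E] {A : Set E}
  {ψ : E → EuclideanSpace ℂ (Fin n)}

theorem mapsTo_polyHull_of_mapsTo_frontier (hK : IsCompact K)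
    (hA : Bornology.IsBounded A) (hψ : DiffContOnCl ℂ ψ (interior A))
    (hψK : MapsTo ψ (frontier A) K) : MapsTo ψ A (polyHull K) := by
  intro a ha
  by_cases ha_int : a ∈ interior A
  · intro P
    refine Complex.norm_le_of_forall_mem_frontier_norm_le (hA.subset interior_subset)
      ((differentiable_eval_mvPolynomial P).comp_diffContOnCl hψ) (fun b hb => ?_)
      (subset_closure ha_int)
    exact subset_polyHull_of_isCompact hK (hψK (frontier_interior_subset hb)) P
  · exact subset_polyHull_of_isCompact hK (hψK ⟨subset_closure ha, ha_int⟩)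

variable {V G : Set (EuclideanSpace ℂ (Fin n))}

theorem mem_polyHull_of_mapsTo_frontier_of_notMem (hK : IsCompact K) (hA : IsClosed A)
    (hA_bdd : Bornology.IsBounded A) (hψc : ContinuousOn ψ A)
    (hψd : DifferentiableOn ℂ ψ (interior A)) (hV : IsOpen V) (hψV : MapsTo ψ (frontier A) V)
    (hψG : MapsTo ψ A G) (hGK : G ∩ frontier V ⊆ K) {a : E} (ha : a ∈ A) (haV : ψ a ∉ V) :
    ψ a ∈ polyHull K := by
  have hclosed : IsClosed (A ∩ ψ ⁻¹' Vᶜ) := hψc.preimage_isClosed_of_isClosed hA hV.isClosed_compl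
  have hdiff : DiffContOnCl ℂ ψ (interior (A ∩ ψ ⁻¹' Vᶜ)) :=
    ⟨hψd.mono (interior_mono inter_subset_left),
      hψc.mono ((closure_minimal interior_subset hclosed).trans inter_subset_left)⟩
  refine mapsTo_polyHull_of_mapsTo_frontier hK (hA_bdd.subset inter_subset_left) hdiff
    (fun b hb => hGK ⟨hψG (hclosed.frontier_subset hb).1, ?_⟩) ⟨ha, haV⟩
  exact mapsTo_frontier_inter_preimage_compl hA hψc hV hψV hb

theorem eventually_mem_polyHull_of_mapsTo_frontier (hK : IsCompact K) (hA : IsCompact A)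
    (hψc : ContinuousOn ψ A) (hψd : DifferentiableOn ℂ ψ (interior A)) (hV : IsOpen V)
    (hψV : MapsTo ψ (frontier A) V) (hG : IsOpen G) (hψG : MapsTo ψ A G)
    (hGK : G ∩ frontier V ⊆ K) {a : E} (ha : a ∈ A) :
    ∀ᶠ z in 𝓝 (ψ a), z ∉ V → z ∈ polyHull K := by
  have hfrontier : frontier A ⊆ A := hA.isClosed.frontier_subset
  have hV_near := eventually_mapsTo_add_right (hA.of_isClosed_subset isClosed_frontier hfrontier)
    (hψc.mono hfrontier) hV hψV
  have hG_near := eventually_mapsTo_add_right hA hψc hG hψG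
  have hshift : Tendsto (fun z => z - ψ a) (𝓝 (ψ a)) (𝓝 0) := tendsto_sub_nhds_zero_iff.2 tendsto_id
  filter_upwards [hshift.eventually hV_near, hshift.eventually hG_near] with z hzV hzG hz
  simpa only [add_sub_cancel] using mem_polyHull_of_mapsTo_frontier_of_notMem
    (ψ := fun x => ψ x + (z - ψ a)) hK hA.isClosed hA.isBounded
    (hψc.add continuousOn_const) (hψd.add_const _) hV hzV hzG hGK ha
    (by simpa only [add_sub_cancel] using hz)

end PolynomialHull

section Hypersurface

variable {n : ℕ} {U H C V V₁ V₂ K : Set (EuclideanSpace ℂ (Fin n))}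
  {p : EuclideanSpace ℂ (Fin n)}

theorem IsRealAnalyticHypersurface.subset (hH : IsRealAnalyticHypersurface U H) : H ⊆ U := by
  obtain ⟨-, -, ρ, -, rfl, -⟩ := hH
  exact sep_subset U _

theorem IsRealAnalyticHypersurface.isOpen_diff (hH : IsRealAnalyticHypersurface U H) :
    IsOpen (U \ H) := by
  obtain ⟨hU, -, ρ, hρ, rfl, -⟩ := hH
  have hdiff : U \ {z | z ∈ U ∧ ρ z = 0} = U ∩ ρ ⁻¹' {0}ᶜ := by ext z; simp
  exact hdiff ▸ hρ.continuousOn.isOpen_inter_preimage hU isOpen_compl_singleton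

theorem IsComponentOfComplement.isOpen (hV : IsComponentOfComplement U H V)
    (hUH : IsOpen (U \ H)) : IsOpen V := by
  obtain ⟨x, -, rfl⟩ := hV
  exact hUH.connectedComponentIn

theorem IsComponentOfComplement.frontier_inter_subset (hV : IsComponentOfComplement U H V)
    (hUH : IsOpen (U \ H)) : frontier V ∩ U ⊆ H := by
  obtain ⟨x, -, rfl⟩ := hV
  rintro z ⟨hz, hzU⟩
  by_contra hzH
  exact disjoint_left.1 (disjoint_frontier_connectedComponentIn hUH x) hz ⟨hzU, hzH⟩

theorem IsComponentOfComplement.disjoint (hV₁ : IsComponentOfComplement U H V₁)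
    (hV₂ : IsComponentOfComplement U H V₂) (hne : V₁ ≠ V₂) : Disjoint V₁ V₂ := by
  obtain ⟨x₁, -, rfl⟩ := hV₁
  obtain ⟨x₂, -, rfl⟩ := hV₂
  refine disjoint_left.2 fun z hz₁ hz₂ => hne ?_
  exact (connectedComponentIn_eq hz₁).trans (connectedComponentIn_eq hz₂).symm

variable {φ : ℂ → EuclideanSpace ℂ (Fin n)}

theorem IsSupportCurveVia.eventually_ne (hφ : IsSupportCurveVia U H p φ C) :
    ∀ᶠ ζ in 𝓝[≠] 0, φ ζ ≠ p := by
  obtain ⟨hdiff, -, ⟨a, ha, b, hb, hab⟩, -, -, -⟩ := hφ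
  by_contra hfreq
  have hconst : EqOn φ (fun _ => p) (ball 0 1) :=
    (hdiff.analyticOnNhd isOpen_ball).eqOn_of_preconnected_of_frequently_eq analyticOnNhd_const
      (convex_ball 0 1).isPreconnected (mem_ball_self one_pos) hfreq
  exact hab ((hconst ha).trans (hconst hb).symm)

theorem IsSupportCurveVia.exists_mapsTo_closedBall (hφ : IsSupportCurveVia U H p φ C)
    {G : Set (EuclideanSpace ℂ (Fin n))} (hG : G ∈ 𝓝 p) :
    ∃ r > 0, r < 1 ∧ MapsTo φ (closedBall 0 r) G ∧ MapsTo φ (sphere 0 r) (C \ {p}) := by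
  have hne := eventually_nhdsWithin_iff.1 hφ.eventually_ne
  obtain ⟨hdiff, -, -, hφ0, rfl, -⟩ := hφ
  have hball : ball (0 : ℂ) 1 ∈ 𝓝 0 := ball_mem_nhds 0 one_pos
  have hφG : φ ⁻¹' G ∈ 𝓝 0 :=
    (hdiff.differentiableAt hball).continuousAt.preimage_mem_nhds (hφ0.symm ▸ hG)
  have hsmall : ∀ᶠ r in 𝓝 (0 : ℝ), closedBall 0 r ⊆ φ ⁻¹' G ∧
      closedBall 0 r ⊆ {ζ | ζ ∈ ({0}ᶜ : Set ℂ) → φ ζ ≠ p} ∧ r < 1 :=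
    (eventually_closedBall_subset hφG).and <|
      (eventually_closedBall_subset hne).and (eventually_lt_nhds one_pos)
  obtain ⟨r, hr0, hrG, hr_ne, hr1⟩ := hsmall.exists_gt
  refine ⟨r, hr0, hr1, hrG, fun ζ hζ => ⟨mem_image_of_mem φ (sphere_subset_ball hr1 hζ), ?_⟩⟩
  exact hr_ne (sphere_subset_closedBall hζ) (ne_of_mem_sphere hζ (ne_of_gt hr0))

theorem IsSupportCurve.eventually_mem_polyHull (hC : IsSupportCurve U H p C) (hV : IsOpen V)
    (hCV : C \ {p} ⊆ V) (hK : IsCompact K) (hKp : K ∈ 𝓝[frontier V] p) :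
    ∀ᶠ z in 𝓝 p, z ∉ V → z ∈ polyHull K := by
  obtain ⟨φ, hφ⟩ := hC
  obtain ⟨G, hG, hpG, hGK⟩ := mem_nhdsWithin.1 hKp
  obtain ⟨r, hr0, hr1, hφG, hφC⟩ := hφ.exists_mapsTo_closedBall (hG.mem_nhds hpG)
  obtain ⟨hdiff, -, -, rfl, -, -⟩ := hφ
  have hdiff_r : DifferentiableOn ℂ φ (closedBall 0 r) := hdiff.mono (closedBall_subset_ball hr1)
  exact eventually_mem_polyHull_of_mapsTo_frontier hK (isCompact_closedBall 0 r)
    hdiff_r.continuousOn (hdiff_r.mono interior_subset) hV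
    ((hφC.mono_right hCV).mono_left frontier_closedBall_subset_sphere) hG hφG hGK
    (mem_closedBall_self hr0.le)

theorem polynomial_hull_contains_neighborhood_general (hU : U ∈ 𝓝 p) (hUH : IsOpen (U \ H))
    (h2 : CurveSupportedFromTwoSides U H p) (hK : IsCompact K) (hKp : K ∈ 𝓝[H] p) :
    polyHull K ∈ 𝓝 p := by
  obtain ⟨C₁, C₂, V₁, V₂, hC₁, hC₂, hV₁, hV₂, hne, hCV₁, hCV₂⟩ := h2
  have hK_frontier : ∀ {V}, IsComponentOfComplement U H V → K ∈ 𝓝[frontier V] p := fun hV => by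
    rw [← nhdsWithin_inter_of_mem' (mem_nhdsWithin_of_mem_nhds hU)]
    exact nhdsWithin_mono p (hV.frontier_inter_subset hUH) hKp
  filter_upwards [hC₁.eventually_mem_polyHull (hV₁.isOpen hUH) hCV₁ hK (hK_frontier hV₁),
    hC₂.eventually_mem_polyHull (hV₂.isOpen hUH) hCV₂ hK (hK_frontier hV₂)] with z h₁ h₂
  by_cases hz : z ∈ V₁
  · exact h₂ (disjoint_left.1 (hV₁.disjoint hV₂ hne) hz)
  · exact h₁ hz

end Hypersurface

theorem polynomial_hull_contains_neighborhood {n : ℕ} (hn : 2 ≤ n)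
    (U H : Set (EuclideanSpace ℂ (Fin n)))
    (hH : IsRealAnalyticHypersurface U H)
    (p : EuclideanSpace ℂ (Fin n)) (hp : p ∈ H)
    (h2 : CurveSupportedFromTwoSides U H p) :
    ∀ K : Set (EuclideanSpace ℂ (Fin n)), IsCompact K → K ⊆ H →
      (∃ δ > 0, H ∩ ball p δ ⊆ K) →
      ∃ ε > 0, ball p ε ⊆ polyHull K := by
  intro K hK _ ⟨δ, hδ, hδK⟩
  exact Metric.mem_nhds_iff.1 <| polynomial_hull_contains_neighborhood_general
    (hH.1.mem_nhds (hH.subset hp)) hH.isOpen_diff h2 hK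
    (Metric.mem_nhdsWithin_iff.2 ⟨δ, hδ, inter_comm H _ ▸ hδK⟩)
end
end
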